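/- Let n ≥ 1. The flip graph of n-periodic 2-triangulations on the 4n-gon is regular of degree 2(n−1): for every n-periodic 2-triangulation T on the 4n-gon, the number of n-periodic 2-triangulations T' on the 4n-gon with T' ≠ T such that T ∖ T' is the rotation orbit ẽ of a single 2-relevant edge e ∈ T (and T' ⊇ T ∖ ẽ) is exactly 2(n−1). -/

import Mathlib

/- Edges on the universal cover of the half-cylinder, modeled by the integers.
   An edge is an unordered pair of distinct integers, represented as an ordered
   pair `(a, b)` with `a < b` (validity). -/

namespace Multitriangulation

abbrev Edge := ℤ × ℤ

/-- Translate an edge by `t`: `[a,b] + t = [a+t, b+t]`. -/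
def shift (e : Edge) (t : ℤ) : Edge := (e.1 + t, e.2 + t)

/-- Two edges (as unordered pairs of integers) cross:
their endpoints strictly interleave. -/
def Crosses (e f : Edge) : Prop :=
  (min e.1 e.2 < min f.1 f.2 ∧ min f.1 f.2 < max e.1 e.2 ∧ max e.1 e.2 < max f.1 f.2) ∨
  (min f.1 f.2 < min e.1 e.2 ∧ min e.1 e.2 < max f.1 f.2 ∧ max f.1 f.2 < max e.1 e.2)

/-- A finite set of edges is an `l`-crossing if it consists of `l` pairwise
crossing edges. -/
def IsCrossing (l : ℕ) (S : Finset Edge) : Prop :=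
  S.card = l ∧ ∀ e ∈ S, ∀ f ∈ S, e ≠ f → Crosses e f

/-- A set of edges is `l`-crossing-free if no `l` of its edges pairwise cross. -/
def CrossingFree (l : ℕ) (E : Set Edge) : Prop :=
  ¬ ∃ S : Finset Edge, ↑S ⊆ E ∧ IsCrossing l S

/-- A set of edges is `n`-periodic if `e ∈ E ↔ e + n ∈ E`. -/
def Periodic (n : ℕ) (E : Set Edge) : Prop := ∀ e, e ∈ E ↔ shift e (n : ℤ) ∈ E

/-- All members are genuine edges `[a,b]` with `a < b`. -/
def ValidEdges (E : Set Edge) : Prop := ∀ e ∈ E, e.1 < e.2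

/-- An `n`-periodic `k`-triangulation on `ℤ`: an `n`-periodic
`(k+1)`-crossing-free set of edges that is maximal under inclusion among
`n`-periodic `(k+1)`-crossing-free sets of edges. -/
def IsTriangulation (n k : ℕ) (T : Set Edge) : Prop :=
  ValidEdges T ∧ Periodic n T ∧ CrossingFree (k+1) T ∧
  ∀ T', ValidEdges T' → Periodic n T' → CrossingFree (k+1) T' → T ⊆ T' → T' = T

/-- Interleaving of representatives `0 ≤ a < b < m`, `0 ≤ c < d < m`:
`a<c<b<d` or `c<a<d<b` (formulated symmetrically via `min`/`max`). -/
def crossIndex (a b c d : ℕ) : Prop :=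
  (min a b < min c d ∧ min c d < max a b ∧ max a b < max c d) ∨
  (min c d < min a b ∧ min a b < max c d ∧ max c d < max a b)

/-- Two edges of the `m`-gon (vertices labeled by `ZMod m`) cross: their
endpoints interleave in cyclic order, via the representatives in `[0, m)`. -/
def PolyCrosses {m : ℕ} (e f : Sym2 (ZMod m)) : Prop :=
  ∃ x y z w : ZMod m, e = s(x, y) ∧ f = s(z, w) ∧ crossIndex x.val y.val z.val w.val

/-- A finite set of polygon edges is an `l`-crossing if it consists of `l`
pairwise crossing edges. -/
def PolyIsCrossing {m : ℕ} (l : ℕ) (S : Finset (Sym2 (ZMod m))) : Prop :=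
  S.card = l ∧ ∀ e ∈ S, ∀ f ∈ S, e ≠ f → PolyCrosses e f

/-- A set of polygon edges is `l`-crossing-free. -/
def PolyCrossingFree {m : ℕ} (l : ℕ) (E : Set (Sym2 (ZMod m))) : Prop :=
  ¬ ∃ S : Finset (Sym2 (ZMod m)), ↑S ⊆ E ∧ PolyIsCrossing l S

/-- Invariance under the rotation `v ↦ v + n`. -/
def PolyPeriodic (n : ℕ) {m : ℕ} (T : Set (Sym2 (ZMod m))) : Prop :=
  ∀ e, e ∈ T ↔ Sym2.map (· + (n : ZMod m)) e ∈ T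

/-- All members are genuine edges (pairs of distinct vertices). -/
def PolyValid {m : ℕ} (T : Set (Sym2 (ZMod m))) : Prop := ∀ e ∈ T, ¬ e.IsDiag

/-- A `2`-triangulation on the `m`-gon: a 3-crossing-free set of edges,
maximal under inclusion among 3-crossing-free sets of edges. -/
def IsPolyTriangulation {m : ℕ} (T : Set (Sym2 (ZMod m))) : Prop :=
  PolyValid T ∧ PolyCrossingFree 3 T ∧
  ∀ T', PolyValid T' → PolyCrossingFree 3 T' → T ⊆ T' → T' = T

/-- An edge of the `4n`-gon is 2-relevant: its endpoints have representatives
`0 ≤ a < b < 4n` with `2 < b − a < 4n − 2`. -/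
def PolyRelevant (n : ℕ) (e : Sym2 (ZMod (4 * n))) : Prop :=
  ∃ a b : ℕ, a < b ∧ b < 4 * n ∧
    e = s(((a : ZMod (4 * n))), ((b : ZMod (4 * n)))) ∧
    2 < b - a ∧ b - a < 4 * n - 2

/-- The rotation orbit `ẽ = {e, e+n, e+2n, e+3n}` of an edge of the `4n`-gon. -/
def tilde (n : ℕ) (e : Sym2 (ZMod (4 * n))) : Set (Sym2 (ZMod (4 * n))) :=
  {e, Sym2.map (· + ((n : ℕ) : ZMod (4 * n))) e,
    Sym2.map (· + ((2 * n : ℕ) : ZMod (4 * n))) e,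
    Sym2.map (· + ((3 * n : ℕ) : ZMod (4 * n))) e}

/-- An `n`-periodic 2-triangulation on the `4n`-gon. -/
def IsPeriodicPolyTriangulation (n : ℕ) (T : Set (Sym2 (ZMod (4 * n)))) : Prop :=
  IsPolyTriangulation T ∧ PolyPeriodic n T


/-!
Lifted to the integers, a 2-triangulation `T` of the `m`-gon is a union of pentagrams, its stars:
every angle of `T` lies in exactly one star, every relevant edge of `T` is shared by two stars, and
every edge outside `T` is the common bisector of exactly two of them.

Removing the orbit of a relevant edge `e` destroys the translates of the two stars adjacent to `e`,
and any edge replacing `e` has to bisect one of these. In general the only candidate is the common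
bisector of the two stars, and its orbit can be inserted because performing the ordinary flips of
the translates of `e` one after the other never creates a 3-crossing. The exception is a star with
two sides in the orbit of `e`: this can only happen for translation by a quarter turn, in a
configuration so rigid that the flip can be written down, and again there is only one.

It remains to count the orbits of relevant edges. The five gaps of a star add up to `m`, and each
gap counts the angles the star contributes at the opposite vertex, so a double count of angles
gives `5 * (n - 1)` for the number of orbits of stars with a chosen first vertex. These correspond
to the orbits of oriented edges of length `3, …, m - 2`, where `m = 4 * n`, and `n` of them have
length `m - 2`. The others are oriented relevant edges: at most one orbit of relevant edges consists
of diameters, and reversing the orientation pairs off the orbits of the remaining ones, which leaves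
`2 * (n - 1)` orbits of relevant edges.
-/

/-! ### Lifted triangulations and their stars -/

/-- An edge of the `m`-gon has the lifts `(i, j)`, `i < j < i + m`, to the integers; turning
`(i, j)` into `(j, i + m)` gives the next one. A relation is a set of edges of the `m`-gon
if it contains all lifts of an edge as soon as it contains one. -/
def TurnInvariant (m : ℤ) (E : ℤ → ℤ → Prop) : Prop := ∀ i j, E j (i + m) ↔ E i j

/-- No two crossing edges of `E` both cross `(i, j)`. -/
def Compatible (m : ℤ) (E : ℤ → ℤ → Prop) (i j : ℤ) : Prop :=
  ∀ a c b d, i < a → a < c → c < j → j < b → b < d → d < i + m → E a b → E c d → False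

/-- The lift to the integers of a 2-triangulation of the `m`-gon: a 3-crossing-free set of
edges containing every edge it is compatible with. -/
structure IsLiftedTriangulation (m : ℤ) (E : ℤ → ℤ → Prop) : Prop where
  lt : ∀ {i j}, E i j → i < j
  lt_add : ∀ {i j}, E i j → j < i + m
  turn : TurnInvariant m E
  compatible : ∀ {i j}, E i j → Compatible m E i j
  edge_of_compatible : ∀ {i j}, i < j → j < i + m → Compatible m E i j → E i j

/-- The image of a set of edges under the reflection `v ↦ -v`. -/
def mirror (E : ℤ → ℤ → Prop) (i j : ℤ) : Prop := E (-j) (-i)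

section Basic

variable {m : ℤ} {E F : ℤ → ℤ → Prop} {i j i' j' : ℤ}

theorem mirror_mirror (E : ℤ → ℤ → Prop) : mirror (mirror E) = E := by
  funext i j
  simp only [mirror, neg_neg]

theorem TurnInvariant.relift (hE : TurnInvariant m E) (h : E i j)
    (hlift : (i' = i ∧ j' = j) ∨ (i' = j ∧ j' = i + m) ∨ (i' = i + m ∧ j' = j + m) ∨
      (i' = j - m ∧ j' = i) ∨ (i' = i - m ∧ j' = j - m)) : E i' j' := by
  have turn_back : ∀ {x y}, E x y → E (y - m) x := fun {x y} hxy =>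
    (hE (y - m) x).1 ((sub_add_cancel y m).symm ▸ hxy)
  rcases hlift with ⟨rfl, rfl⟩ | ⟨rfl, rfl⟩ | ⟨rfl, rfl⟩ | ⟨rfl, rfl⟩ | ⟨rfl, rfl⟩
  · exact h
  · exact (hE _ _).2 h
  · exact (hE _ _).2 ((hE _ _).2 h)
  · exact turn_back h
  · exact turn_back (turn_back h)

theorem TurnInvariant.mirror (hE : TurnInvariant m E) : TurnInvariant m (mirror E) :=
  fun _ _ => ⟨fun h => hE.relift h (by omega), fun h => hE.relift h (by omega)⟩

theorem Compatible.mono (h : Compatible m F i j) (hEF : ∀ a b, E a b → F a b) :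
    Compatible m E i j :=
  fun a c b d h₁ h₂ h₃ h₄ h₅ h₆ hab hcd =>
    h a c b d h₁ h₂ h₃ h₄ h₅ h₆ (hEF _ _ hab) (hEF _ _ hcd)

theorem Compatible.mirror (hE : TurnInvariant m E) (h : Compatible m E (-j) (-i)) :
    Compatible m (mirror E) i j := fun a c b d h₁ h₂ h₃ h₄ h₅ h₆ hab hcd =>
  h (-c) (-a) (m - d) (m - b) (by omega) (by omega) (by omega) (by omega) (by omega) (by omega)
    (hE.relift hcd (by omega)) (hE.relift hab (by omega))

namespace IsLiftedTriangulation

variable (hE : IsLiftedTriangulation m E)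
include hE

theorem relift (h : E i j)
    (hlift : (i' = i ∧ j' = j) ∨ (i' = j ∧ j' = i + m) ∨ (i' = i + m ∧ j' = j + m) ∨
      (i' = j - m ∧ j' = i) ∨ (i' = i - m ∧ j' = j - m)) : E i' j' :=
  hE.turn.relift h hlift

theorem false_of_threeCrossing {a b c d e f : ℤ} (had : E a d) (hbe : E b e) (hcf : E c f)
    (hord : a < b ∧ b < c ∧ c < d ∧ d < e ∧ e < f ∧ f < a + m) : False :=
  hE.compatible had b c e f (by omega) (by omega) (by omega) (by omega) (by omega) (by omega)
    hbe hcf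

theorem exists_crossing_of_not_edge {v t : ℤ} (hvt : ¬ E v t) (hlt : v < t) (hlt' : t < v + m) :
    ∃ a c b d, (v < a ∧ a < c ∧ c < t ∧ t < b ∧ b < d ∧ d < v + m) ∧ E a b ∧ E c d := by
  by_contra hno
  exact hvt (hE.edge_of_compatible hlt hlt' fun a c b d h₁ h₂ h₃ h₄ h₅ h₆ hab hcd =>
    hno ⟨a, c, b, d, ⟨h₁, h₂, h₃, h₄, h₅, h₆⟩, hab, hcd⟩)

theorem edge_of_irrelevant {v t : ℤ} (hlt : v < t) (hlt' : t < v + m)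
    (ht : t ≤ v + 2 ∨ v + m - 2 ≤ t) : E v t :=
  hE.edge_of_compatible hlt hlt' fun a c b d => by omega

theorem mirror : IsLiftedTriangulation m (mirror E) where
  lt h := by have := hE.lt h; omega
  lt_add h := by have := hE.lt_add h; omega
  turn := hE.turn.mirror
  compatible h := (hE.compatible h).mirror hE.turn
  edge_of_compatible hlt hlt' h :=
    hE.edge_of_compatible (by omega) (by omega)
      (mirror_mirror E ▸ Compatible.mirror hE.turn.mirror (by simpa only [neg_neg] using h))

theorem eq_of_le (hF : IsLiftedTriangulation m F) (hle : ∀ i j, E i j → F i j) : E = F := by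
  funext i j
  exact propext ⟨hle i j, fun h => hE.edge_of_compatible (hF.lt h) (hF.lt_add h)
    ((hF.compatible h).mono hle)⟩

end IsLiftedTriangulation

end Basic

theorem exists_first_after (P : ℤ → Prop) {lo a : ℤ} (hlo : lo < a) (ha : P a) :
    ∃ b, lo < b ∧ b ≤ a ∧ P b ∧ ∀ t, lo < t → t < b → ¬ P t := by
  classical
  obtain ⟨b, ⟨hlob, hb⟩, hmin⟩ := Int.exists_least_of_bdd (P := fun x => lo < x ∧ P x)
    ⟨lo, fun z hz => hz.1.le⟩ ⟨a, hlo, ha⟩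
  exact ⟨b, hlob, hmin a ⟨hlo, ha⟩, hb, fun t hlot htb ht => (hmin t ⟨hlot, ht⟩).not_gt htb⟩

theorem exists_last_before (P : ℤ → Prop) {hi a : ℤ} (hhi : a < hi) (ha : P a) :
    ∃ b, b < hi ∧ a ≤ b ∧ P b ∧ ∀ t, b < t → t < hi → ¬ P t := by
  obtain ⟨b, hhib, hba, hb, hmin⟩ := exists_first_after (fun x => P (-x)) (neg_lt_neg hhi)
    (by simpa only [neg_neg] using ha)
  exact ⟨-b, by omega, by omega, hb, fun t hbt hthi ht =>
    hmin (-t) (by omega) (by omega) (by simpa only [neg_neg] using ht)⟩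

/-- `(v, u)` and `(v, w)` are consecutive edges at `v`, both on the boundary of a star: neither
is shorter than 2. -/
structure IsRelevantAngle (m : ℤ) (E : ℤ → ℤ → Prop) (v u w : ℤ) : Prop where
  edge_left : E v u
  edge_right : E v w
  lt : u < w
  le_left : v + 2 ≤ u
  le_right : w ≤ v + m - 2
  not_edge : ∀ t, u < t → t < w → ¬ E v t

/-- A 2-star (pentagram) of `E`: five vertices in cyclic order, joined by edges in steps
of two. -/
structure IsStar (m : ℤ) (E : ℤ → ℤ → Prop) (s₀ s₁ s₂ s₃ s₄ : ℤ) : Prop where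
  lt₀₁ : s₀ < s₁
  lt₁₂ : s₁ < s₂
  lt₂₃ : s₂ < s₃
  lt₃₄ : s₃ < s₄
  lt₄₀ : s₄ < s₀ + m
  edge₀₂ : E s₀ s₂
  edge₀₃ : E s₀ s₃
  edge₁₃ : E s₁ s₃
  edge₁₄ : E s₁ s₄
  edge₂₄ : E s₂ s₄

section Stars

variable {m : ℤ} {E : ℤ → ℤ → Prop} {v u w : ℤ}

namespace IsRelevantAngle

theorem mirror (h : IsRelevantAngle m E v u w) (hE : IsLiftedTriangulation m E) :
    IsRelevantAngle m (mirror E) (-v) (m - w) (m - u) where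
  edge_left := hE.relift h.edge_right (by omega)
  edge_right := hE.relift h.edge_left (by omega)
  lt := by linarith [h.lt]
  le_left := by linarith [h.le_right]
  le_right := by linarith [h.le_left]
  not_edge t hlt hlt' ht :=
    h.not_edge (m - t) (by omega) (by omega) (hE.relift ht (by omega))

theorem exists_edge_to_right (h : IsRelevantAngle m E v u w) (hE : IsLiftedTriangulation m E) :
    ∃ a, v < a ∧ a < u ∧ E a w := by
  obtain ⟨-, hvw, huw, hvu, hwv, hno⟩ := h
  by_cases hw : w = u + 1
  · exact ⟨u - 1, by omega, by omega, hE.edge_of_irrelevant (by omega) (by omega) (by omega)⟩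
  have advance : ∀ b, u < b → b < w → (b = u + 1 ∨ ∃ a, v < a ∧ a < u ∧ E a b) →
      ∃ b', b < b' ∧ b' ≤ w ∧ ∃ a, v < a ∧ a < u ∧ E a b' := by
    intro b hub hbw hb
    obtain ⟨a, c, b', d, hord, hab', hcd⟩ :=
      hE.exists_crossing_of_not_edge (hno b hub hbw) (by omega) (by omega)
    have hb'w : b' ≤ w := by
      by_contra hlt
      exact hE.false_of_threeCrossing hvw hab' hcd (by omega)
    refine ⟨b', by omega, hb'w, a, by omega, ?_, hab'⟩
    rcases hb with rfl | ⟨x, hvx, hxu, hxb⟩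
    · omega
    · by_contra hle
      exact hE.false_of_threeCrossing hxb hab' hcd (by omega)
  obtain ⟨b₀, hb₀, hb₀w, hex⟩ := advance (u + 1) (by omega) (by omega) (Or.inl rfl)
  obtain ⟨b, hbw, hb₀b, hexb, hlast⟩ :=
    exists_last_before (fun b => ∃ a, v < a ∧ a < u ∧ E a b) (hi := w + 1) (by omega) hex
  obtain rfl | hlt : b = w ∨ b < w := by omega
  · exact hexb
  · obtain ⟨b', hbb', hb'w, hexb'⟩ := advance b (by omega) hlt (Or.inr hexb)
    exact (hlast b' hbb' (by omega) hexb').elim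

theorem exists_edge_from_left (h : IsRelevantAngle m E v u w) (hE : IsLiftedTriangulation m E) :
    ∃ d, w < d ∧ d < v + m ∧ E u d := by
  obtain ⟨a, hva, hau, haw⟩ := (h.mirror hE).exists_edge_to_right hE.mirror
  exact ⟨m - a, by omega, by omega, hE.relift haw (by omega)⟩

/-- The second vertex `a` is the first one after `v` joined to `w`, the last vertex `d` the last
one before `v + m` joined to `u`. The angles at `w` and `u` next to `(a, w)` and `(u, d)` force
`a` and `d` to be joined. -/
theorem exists_isStar (h : IsRelevantAngle m E v u w) (hE : IsLiftedTriangulation m E) :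
    ∃ a d, IsStar m E v a u w d := by
  obtain ⟨a₀, hva₀, ha₀u, ha₀w⟩ := h.exists_edge_to_right hE
  obtain ⟨d₀, hwd₀, hd₀v, hud₀⟩ := h.exists_edge_from_left hE
  obtain ⟨hvu, hvw, huw, _, _, -⟩ := h
  obtain ⟨a, hva, haa₀, haw, hafirst⟩ := exists_first_after (fun x => E x w) hva₀ ha₀w
  obtain ⟨d, hdv, hd₀d, hud, hdlast⟩ := exists_last_before (fun x => E u x) hd₀v hud₀
  have angle_w : IsRelevantAngle m E w (v + m) (a + m) :=
    ⟨hE.relift hvw (by omega), hE.relift haw (by omega), by omega, by omega, by omega,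
      fun t ht ht' hwt => hafirst (t - m) (by omega) (by omega) (hE.relift hwt (by omega))⟩
  have angle_u : IsRelevantAngle m E u d (v + m) :=
    ⟨hud, hE.relift hvu (by omega), by omega, by omega, by omega, hdlast⟩
  obtain ⟨x, hwx, hxv, hxa⟩ := angle_w.exists_edge_to_right hE
  obtain ⟨z, hvz, hzu, hdz⟩ := angle_u.exists_edge_from_left hE
  have hax : E a x := hE.relift hxa (by omega)
  have hzd : E (z - m) d := hE.relift hdz (by omega)
  have hdx : d ≤ x := by
    by_contra hlt
    exact hE.false_of_threeCrossing hud (hE.relift hvw (i' := w) (j' := v + m) (by omega)) hxa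
      (by omega)
  have hza : z - m ≤ a := by
    by_contra hlt
    exact hE.false_of_threeCrossing hvu haw hzd (by omega)
  have had : E a d := by
    by_cases hd : d = x
    · exact hd ▸ hax
    by_cases ha : z - m = a
    · exact ha ▸ hzd
    exact (hE.false_of_threeCrossing hvu hzd hax (by omega)).elim
  exact ⟨a, d, by omega, by omega, huw, by omega, by omega, hvu, hvw, haw, had, hud⟩

end IsRelevantAngle

namespace IsStar

variable {s₀ s₁ s₂ s₃ s₄ : ℤ}

theorem rotate (hE : IsLiftedTriangulation m E) (h : IsStar m E s₀ s₁ s₂ s₃ s₄) :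
    IsStar m E s₁ s₂ s₃ s₄ (s₀ + m) :=
  ⟨h.lt₁₂, h.lt₂₃, h.lt₃₄, h.lt₄₀, by linarith [h.lt₀₁], h.edge₁₃, h.edge₁₄, h.edge₂₄,
    (hE.turn _ _).2 h.edge₀₂, (hE.turn _ _).2 h.edge₀₃⟩

theorem not_edge_of_mem_Ioo (hE : IsLiftedTriangulation m E) (h : IsStar m E s₀ s₁ s₂ s₃ s₄)
    {t : ℤ} (hlt : s₂ < t) (hlt' : t < s₃) : ¬ E s₀ t := fun ht =>
  hE.false_of_threeCrossing ht h.edge₁₃ h.edge₂₄ ⟨h.lt₀₁, h.lt₁₂, hlt, hlt', h.lt₃₄, h.lt₄₀⟩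

variable {a d a' u' w' d' t : ℤ}

theorem le_of_same_angle (hE : IsLiftedTriangulation m E) (h : IsStar m E v a u w d)
    (h' : IsStar m E v a' u w d') : a ≤ a' ∧ d' ≤ d := by
  constructor
  · by_contra hlt
    exact (((h.rotate hE).rotate hE).rotate hE).not_edge_of_mem_Ioo hE (t := a' + m)
      (by linarith [h'.lt₀₁]) (by omega) ((hE.turn _ _).2 h'.edge₁₃)
  · by_contra hlt
    exact ((h.rotate hE).rotate hE).not_edge_of_mem_Ioo hE (by omega) h'.lt₄₀ h'.edge₂₄

theorem eq_of_mem_Ioc (hE : IsLiftedTriangulation m E) (h : IsStar m E v a u w d)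
    (h' : IsStar m E v a' u' w' d') (hu : u < t) (hw : t ≤ w) (hu' : u' < t) (hw' : t ≤ w') :
    a = a' ∧ u = u' ∧ w = w' ∧ d = d' := by
  obtain rfl : w = w' := by
    rcases lt_trichotomy w w' with hlt | heq | hlt
    · exact (h'.not_edge_of_mem_Ioo hE (by omega) hlt h.edge₀₃).elim
    · exact heq
    · exact (h.not_edge_of_mem_Ioo hE (by omega) hlt h'.edge₀₃).elim
  obtain rfl : u = u' := by
    rcases lt_trichotomy u u' with hlt | heq | hlt
    · exact (h.not_edge_of_mem_Ioo hE hlt (by omega) h'.edge₀₂).elim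
    · exact heq
    · exact (h'.not_edge_of_mem_Ioo hE hlt (by omega) h.edge₀₂).elim
  have := h.le_of_same_angle hE h'
  have := h'.le_of_same_angle hE h
  omega

theorem eq_of_same_left (hE : IsLiftedTriangulation m E) (h : IsStar m E v a u w d)
    (h' : IsStar m E v a' u w' d') : a = a' ∧ w = w' ∧ d = d' := by
  have := h.eq_of_mem_Ioc hE h' (lt_add_one u) h.lt₂₃ (lt_add_one u) h'.lt₂₃
  omega

end IsStar

namespace IsLiftedTriangulation

variable (hE : IsLiftedTriangulation m E) {t : ℤ}
include hE

theorem exists_isStar_right (ht : E v t) (hlt : v + 2 ≤ t) (hlt' : t < v + m - 2) :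
    ∃ a b c, IsStar m E v a t b c := by
  obtain ⟨b, htb, hbv, hvb, hno⟩ := exists_first_after (fun x => E v x) hlt'
    (hE.edge_of_irrelevant (by omega) (by omega) (by omega))
  obtain ⟨a, c, hs⟩ := IsRelevantAngle.exists_isStar ⟨ht, hvb, htb, hlt, hbv, hno⟩ hE
  exact ⟨a, b, c, hs⟩

theorem exists_isStar_left (ht : E v t) (hlt : v + 2 < t) (hlt' : t ≤ v + m - 2) :
    ∃ a b c, IsStar m E v a b t c := by
  obtain ⟨b, hbt, hvb, hEvb, hno⟩ := exists_last_before (fun x => E v x) hlt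
    (hE.edge_of_irrelevant (by omega) (by omega) (by omega))
  obtain ⟨a, c, hs⟩ := IsRelevantAngle.exists_isStar ⟨hEvb, ht, hbt, hvb, hlt', hno⟩ hE
  exact ⟨a, b, c, hs⟩

theorem exists_isStar_of_mem_Ioc (hlt : v + 2 < t) (hlt' : t ≤ v + m - 2) :
    ∃ a u w d, IsStar m E v a u w d ∧ u < t ∧ t ≤ w := by
  obtain ⟨u, hut, hvu, hEvu, hlast⟩ := exists_last_before (fun x => E v x) hlt
    (hE.edge_of_irrelevant (by omega) (by omega) (by omega))
  obtain ⟨w, htw, hwv, hEvw, hfirst⟩ := exists_first_after (fun x => E v x) (lo := t - 1)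
    (a := v + m - 2) (by omega) (hE.edge_of_irrelevant (by omega) (by omega) (by omega))
  have hno : ∀ s, u < s → s < w → ¬ E v s := fun s hus hsw =>
    if hst : s < t then hlast s hus hst else hfirst s (by omega) hsw
  obtain ⟨a, d, hs⟩ :=
    IsRelevantAngle.exists_isStar ⟨hEvu, hEvw, by omega, hvu, hwv, hno⟩ hE
  exact ⟨a, u, w, d, hs, hut, by omega⟩

theorem exists_isStar_of_not_edge (ht : ¬ E v t) (hlt : v < t) (hlt' : t < v + m) :
    ∃ a u w d, IsStar m E v a u w d ∧ u < t ∧ t < w := by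
  have hrel : ¬ (t ≤ v + 2 ∨ v + m - 2 ≤ t) := fun h => ht (hE.edge_of_irrelevant hlt hlt' h)
  obtain ⟨a, u, w, d, hs, hut, htw⟩ := hE.exists_isStar_of_mem_Ioc (v := v) (t := t)
    (by omega) (by omega)
  exact ⟨a, u, w, d, hs, hut, htw.lt_of_ne fun h => ht (h ▸ hs.edge₀₃)⟩

end IsLiftedTriangulation

end Stars

/-! ### Orbits and flips -/

/-- Invariance under translation by the multiples of `p`. -/
def TranslationInvariant (p : ℤ) (E : ℤ → ℤ → Prop) : Prop :=
  ∀ i j q, p ∣ q → E i j → E (i + q) (j + q)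

/-- `(i, j)` is a lift of a translate of the edge `(v, t)` of the `m`-gon by a multiple of `p`. -/
def InOrbit (m p v t i j : ℤ) : Prop :=
  ∃ q, p ∣ q ∧ ((i = v + q ∧ j = t + q) ∨ (i = t + q ∧ j = v + m + q))

/-- The edges of `E` outside the orbit of `(v, t)`. -/
def removeOrbit (m p : ℤ) (E : ℤ → ℤ → Prop) (v t i j : ℤ) : Prop :=
  E i j ∧ ¬ InOrbit m p v t i j

/-- The set of edges obtained from `E` by exchanging the orbit of `(v, t)` for the one of
`(x, y)`. -/
def flipOrbit (m p : ℤ) (E : ℤ → ℤ → Prop) (v t x y i j : ℤ) : Prop :=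
  removeOrbit m p E v t i j ∨ InOrbit m p x y i j

/-- `E'` is a triangulation invariant under translation by `p` that arises from `E` by exchanging
the orbit of `(v, t)` for other edges. -/
structure IsFlipOf (m p : ℤ) (E : ℤ → ℤ → Prop) (v t : ℤ) (E' : ℤ → ℤ → Prop) : Prop where
  isLifted : IsLiftedTriangulation m E'
  translationInvariant : TranslationInvariant p E'
  of_removeOrbit : ∀ i j, removeOrbit m p E v t i j → E' i j
  not_edge : ¬ E' v t

/-- The orbit of `(v, t)` can be flipped in exactly one way. -/
def HasUniqueFlip (m p : ℤ) (E : ℤ → ℤ → Prop) (v t : ℤ) : Prop := ∃! E', IsFlipOf m p E v t E'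

section Orbits

variable {m p : ℤ} {E F : ℤ → ℤ → Prop} {v t x y i j q : ℤ}

theorem TurnInvariant.translationInvariant (hE : TurnInvariant m E) :
    TranslationInvariant m E := by
  rintro i j q ⟨k, rfl⟩ h
  induction k using Int.induction_on with
  | zero => simpa only [mul_zero, add_zero] using h
  | succ k ih => exact hE.relift ih (by rw [mul_add, mul_one]; omega)
  | pred k ih => exact hE.relift ih (by rw [mul_sub, mul_one]; omega)

theorem TranslationInvariant.sub (hE : TranslationInvariant p E) (hq : p ∣ q) (h : E i j) :
    E (i - q) (j - q) := by
  simpa only [sub_eq_add_neg] using hE i j (-q) ((dvd_neg).2 hq) h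

theorem TranslationInvariant.mirror (hE : TranslationInvariant p E) :
    TranslationInvariant p (mirror E) := fun i j q hq h => by
  have := hE.sub hq h
  rwa [← neg_add', ← neg_add'] at this

theorem TurnInvariant.compatible (hE : TurnInvariant m E) : TurnInvariant m (Compatible m E) :=
  fun i j =>
  ⟨fun h a c b d h₁ h₂ h₃ h₄ h₅ h₆ hab hcd => h b d (a + m) (c + m) (by omega) (by omega)
      (by omega) (by omega) (by omega) (by omega) ((hE _ _).2 hab) ((hE _ _).2 hcd),
    fun h a c b d h₁ h₂ h₃ h₄ h₅ h₆ hab hcd => h (b - m) (d - m) a c (by omega) (by omega)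
      (by omega) (by omega) (by omega) (by omega) (hE.relift hab (by omega))
      (hE.relift hcd (by omega))⟩

theorem TranslationInvariant.compatible (hE : TranslationInvariant p E) :
    TranslationInvariant p (Compatible m E) := fun i j q hq h a c b d h₁ h₂ h₃ h₄ h₅ h₆ hab hcd =>
  h (a - q) (c - q) (b - q) (d - q) (by omega) (by omega) (by omega) (by omega) (by omega)
    (by omega) (hE.sub hq hab) (hE.sub hq hcd)

namespace InOrbit

theorem refl (m p v t : ℤ) : InOrbit m p v t v t := ⟨0, dvd_zero _, by omega⟩

theorem translationInvariant : TranslationInvariant p (InOrbit m p v t) := by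
  rintro i j s hs ⟨q, hq, hij⟩
  exact ⟨q + s, dvd_add hq hs, by omega⟩

theorem turnInvariant (hp : p ∣ m) : TurnInvariant m (InOrbit m p v t) := by
  refine fun i j => ⟨?_, ?_⟩
  · rintro ⟨q, hq, hij | hij⟩
    · exact ⟨q - m, dvd_sub hq hp, by omega⟩
    · exact ⟨q, hq, by omega⟩
  · rintro ⟨q, hq, hij | hij⟩
    · exact ⟨q, hq, by omega⟩
    · exact ⟨q + m, dvd_add hq hp, by omega⟩

theorem symm (hp : p ∣ m) (h : InOrbit m p v t i j) : InOrbit m p i j v t := by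
  obtain ⟨q, hq, hij | hij⟩ := h
  · exact ⟨-q, (dvd_neg).2 hq, by omega⟩
  · exact ⟨-q - m, dvd_sub ((dvd_neg).2 hq) hp, by omega⟩

theorem mirror (hp : p ∣ m) (h : InOrbit m p v t i j) : InOrbit m p (-t) (-v) (-j) (-i) := by
  obtain ⟨q, hq, hij | hij⟩ := h
  · exact ⟨-q, (dvd_neg).2 hq, by omega⟩
  · exact ⟨-q - m, dvd_sub ((dvd_neg).2 hq) hp, by omega⟩

theorem edge (h : InOrbit m p v t i j) (hF : TurnInvariant m F)
    (hP : TranslationInvariant p F) (hvt : F v t) : F i j := by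
  obtain ⟨q, hq, ⟨rfl, rfl⟩ | ⟨rfl, rfl⟩⟩ := h
  · exact hP _ _ _ hq hvt
  · exact hP _ _ _ hq ((hF _ _).2 hvt)

theorem congr_left (hp : p ∣ m) (h : InOrbit m p v t x y) :
    InOrbit m p v t i j ↔ InOrbit m p x y i j :=
  ⟨fun k => k.edge (turnInvariant hp) translationInvariant (h.symm hp),
    fun k => k.edge (turnInvariant hp) translationInvariant h⟩

end InOrbit

theorem TurnInvariant.removeOrbit (hE : TurnInvariant m E) (hp : p ∣ m) :
    TurnInvariant m (removeOrbit m p E v t) :=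
  fun i j => and_congr (hE i j) (not_congr (InOrbit.turnInvariant hp i j))

theorem TranslationInvariant.removeOrbit (hE : TranslationInvariant p E) :
    TranslationInvariant p (removeOrbit m p E v t) := fun i j q hq h =>
  ⟨hE i j q hq h.1, fun ho => h.2 (by
    simpa only [add_sub_cancel_right] using InOrbit.translationInvariant.sub hq ho)⟩

theorem TurnInvariant.flipOrbit (hE : TurnInvariant m E) (hp : p ∣ m) :
    TurnInvariant m (flipOrbit m p E v t x y) :=
  fun i j => or_congr (hE.removeOrbit hp i j) (InOrbit.turnInvariant hp i j)

theorem TranslationInvariant.flipOrbit (hE : TranslationInvariant p E) :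
    TranslationInvariant p (flipOrbit m p E v t x y) := fun i j q hq h =>
  h.imp (hE.removeOrbit i j q hq) (InOrbit.translationInvariant i j q hq)

/-- A 3-crossing of the new set contains at least two edges of the new orbit. -/
theorem isLiftedTriangulation_flipOrbit (hE : IsLiftedTriangulation m E)
    (hP : TranslationInvariant p E) (hp : p ∣ m) (hxy : x < y) (hxy' : y < x + m)
    (hcomp : Compatible m (removeOrbit m p E v t) x y)
    (hcross : ∀ i j a b c d, InOrbit m p x y i j → InOrbit m p x y a b →
      flipOrbit m p E v t x y c d →
      ¬ (i < a ∧ a < c ∧ c < j ∧ j < b ∧ b < d ∧ d < i + m))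
    (hold : ¬ Compatible m (flipOrbit m p E v t x y) v t)
    (hnew : ∀ i j, i < j → j < i + m → ¬ E i j → Compatible m (flipOrbit m p E v t x y) i j →
      InOrbit m p x y i j) :
    IsLiftedTriangulation m (flipOrbit m p E v t x y) where
  lt := by
    rintro i j (h | ⟨_, _, h⟩)
    · exact hE.lt h.1
    · omega
  lt_add := by
    rintro i j (h | ⟨_, _, h⟩)
    · exact hE.lt_add h.1
    · omega
  turn := hE.turn.flipOrbit hp
  compatible := by
    intro i j h a c b d h₁ h₂ h₃ h₄ h₅ h₆ hab hcd
    have turn := hE.turn.removeOrbit hp (v := v) (t := t)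
    have comp : ∀ {i j}, InOrbit m p x y i j → Compatible m (removeOrbit m p E v t) i j :=
      fun ho => ho.edge turn.compatible hP.removeOrbit.compatible hcomp
    rcases h with h | h <;> rcases hab with hab | hab <;> rcases hcd with hcd | hcd
    · exact hE.false_of_threeCrossing h.1 hab.1 hcd.1 (by omega)
    · exact comp hcd _ _ _ _ h₃ h₄ h₅ h₆ (by omega) (by omega) ((turn _ _).2 h) ((turn _ _).2 hab)
    · exact comp hab _ _ _ _ h₂ h₃ h₄ h₅ h₆ (by omega) hcd ((turn _ _).2 h)
    · exact hcross _ _ _ _ _ _ hab hcd (Or.inl ((turn _ _).2 h)) (by omega)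
    · exact comp h _ _ _ _ h₁ h₂ h₃ h₄ h₅ h₆ hab hcd
    · exact hcross _ _ _ _ _ _ hcd ((InOrbit.turnInvariant hp _ _).2 h)
        (Or.inl ((turn _ _).2 hab)) (by omega)
    · exact hcross _ _ _ _ _ _ h hab (Or.inl hcd) (by omega)
    · exact hcross _ _ _ _ _ _ h hab (Or.inr hcd) (by omega)
  edge_of_compatible := by
    intro i j hlt hlt' h
    by_cases hij : E i j
    · refine Or.inl ⟨hij, fun ho => hold ?_⟩
      exact (ho.symm hp).edge (hE.turn.flipOrbit hp).compatible hP.flipOrbit.compatible h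
    · exact Or.inr (hnew i j hlt hlt' hij h)

theorem HasUniqueFlip.of_flipOrbit (hE : IsLiftedTriangulation m E)
    (hP : TranslationInvariant p E) (hp : p ∣ m) (hvt : E v t) (hxy : ¬ E x y)
    (hflip : IsLiftedTriangulation m (flipOrbit m p E v t x y))
    (hnew : ∀ E', IsFlipOf m p E v t E' → ∀ i j, E' i j → ¬ E i j → InOrbit m p x y i j) :
    HasUniqueFlip m p E v t := by
  refine ⟨flipOrbit m p E v t x y, ⟨hflip, hP.flipOrbit, fun _ _ => Or.inl, ?_⟩, fun E' hE' => ?_⟩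
  · rintro (h | h)
    · exact h.2 (InOrbit.refl m p v t)
    · exact hxy ((h.symm hp).edge hE.turn hP hvt)
  obtain ⟨i, j, hij, hij'⟩ : ∃ i j, E' i j ∧ ¬ E i j := by
    by_contra! hle
    exact hE'.not_edge (hE'.isLifted.eq_of_le hE hle ▸ hvt)
  have hE'xy : E' x y := ((hnew E' hE' i j hij hij').symm hp).edge hE'.isLifted.turn
    hE'.translationInvariant hij
  refine (hflip.eq_of_le hE'.isLifted ?_).symm
  rintro a b (h | h)
  · exact hE'.of_removeOrbit a b h
  · exact h.edge hE'.isLifted.turn hE'.translationInvariant hE'xy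

theorem HasUniqueFlip.of_turn (hp : p ∣ m) (h : HasUniqueFlip m p E t (v + m)) :
    HasUniqueFlip m p E v t := by
  have horbit : ∀ i j, InOrbit m p v t i j ↔ InOrbit m p t (v + m) i j := fun i j =>
    InOrbit.congr_left hp ((InOrbit.turnInvariant hp _ _).2 (InOrbit.refl m p v t))
  have hflip : ∀ E', IsFlipOf m p E t (v + m) E' ↔ IsFlipOf m p E v t E' := fun E' =>
    ⟨fun h' => ⟨h'.1, h'.2, fun i j k => h'.3 i j ⟨k.1, (horbit i j).not.1 k.2⟩,
      (h'.1.turn v t).not.1 h'.4⟩,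
    fun h' => ⟨h'.1, h'.2, fun i j k => h'.3 i j ⟨k.1, (horbit i j).not.2 k.2⟩,
      (h'.1.turn v t).not.2 h'.4⟩⟩
  simpa only [HasUniqueFlip, hflip] using h

theorem IsFlipOf.mirror (hp : p ∣ m) (h : IsFlipOf m p E v t F) :
    IsFlipOf m p (mirror E) (-t) (-v) (mirror F) where
  isLifted := h.isLifted.mirror
  translationInvariant := h.translationInvariant.mirror
  of_removeOrbit i j k := h.of_removeOrbit _ _ ⟨k.1, fun ho => k.2 (by
    simpa only [neg_neg] using ho.mirror hp)⟩
  not_edge := by simpa only [Multitriangulation.mirror, neg_neg] using h.not_edge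

theorem HasUniqueFlip.of_mirror (hp : p ∣ m) (h : HasUniqueFlip m p (mirror E) (-t) (-v)) :
    HasUniqueFlip m p E v t := by
  obtain ⟨F, hF, huniq⟩ := h
  refine ⟨mirror F, ?_, fun F' hF' => ?_⟩
  · simpa only [neg_neg, mirror_mirror] using hF.mirror hp
  · rw [← huniq _ (hF'.mirror hp), mirror_mirror]

end Orbits

/-! ### Generic flips -/

/-- The two stars adjacent to the edge `(v, t)`: `(v, a, t, b, c)` to its right and
`(v, a', b', t, c')` to its left. -/
structure StarPair (m : ℤ) (E : ℤ → ℤ → Prop) (v t a b c a' b' c' : ℤ) : Prop where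
  right : IsStar m E v a t b c
  left : IsStar m E v a' b' t c'

/-- A star pair whose common bisector is `(b', c)`. The other star pairs are mirror images of
these. -/
structure OrderedStarPair (m : ℤ) (E : ℤ → ℤ → Prop) (v t a b c a' b' c' : ℤ) : Prop
    extends StarPair m E v t a b c a' b' c' where
  le_snd : a ≤ a'
  last_le : c' ≤ b

/-- `F` contains the sides of the two stars of a star pair other than the common one. -/
structure SidesIn (F : ℤ → ℤ → Prop) (v t a b c a' b' c' : ℤ) : Prop where
  edge_v_b : F v b
  edge_a_b : F a b
  edge_a_c : F a c
  edge_t_c : F t c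
  edge_v_b' : F v b'
  edge_a'_t : F a' t
  edge_a'_c' : F a' c'
  edge_b'_c' : F b' c'

/-- `F` is a triangulation obtained from `E` by exchanging some translates of `(v, t)` by
multiples of `p`, seen as edges of the `m`-gon, for the same translates of `(x, y)`. -/
structure IsPartialFlip (m p : ℤ) (E : ℤ → ℤ → Prop) (v t x y : ℤ) (F : ℤ → ℤ → Prop) :
    Prop where
  isLifted : IsLiftedTriangulation m F
  of_removeOrbit : ∀ i j, removeOrbit m p E v t i j → F i j
  edge_or_edge : ∀ s, p ∣ s → F (v + s) (t + s) ∨ F (x + s) (y + s)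

section GenericFlip

variable {m p : ℤ} {E F : ℤ → ℤ → Prop} {v t a b c a' b' c' : ℤ}

theorem IsStar.translate {s₀ s₁ s₂ s₃ s₄ q : ℤ} (hP : TranslationInvariant p E) (hq : p ∣ q)
    (h : IsStar m E s₀ s₁ s₂ s₃ s₄) : IsStar m E (s₀ + q) (s₁ + q) (s₂ + q) (s₃ + q) (s₄ + q) :=
  ⟨by linarith [h.lt₀₁], by linarith [h.lt₁₂], by linarith [h.lt₂₃], by linarith [h.lt₃₄],
    by linarith [h.lt₄₀], hP _ _ _ hq h.edge₀₂, hP _ _ _ hq h.edge₀₃, hP _ _ _ hq h.edge₁₃,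
    hP _ _ _ hq h.edge₁₄, hP _ _ _ hq h.edge₂₄⟩

theorem IsStar.mirror {s₀ s₁ s₂ s₃ s₄ : ℤ} (h : IsStar m E s₀ s₁ s₂ s₃ s₄) :
    IsStar m (mirror E) (-s₄) (-s₃) (-s₂) (-s₁) (-s₀) := by
  obtain ⟨_, _, _, _, _, h₀₂, h₀₃, h₁₃, h₁₄, h₂₄⟩ := h
  constructor <;> first | omega | simpa only [Multitriangulation.mirror, neg_neg]

theorem IsLiftedTriangulation.exists_starPair (hE : IsLiftedTriangulation m E) (hvt : E v t)
    (hlt : v + 2 < t) (hlt' : t < v + m - 2) :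
    ∃ a b c a' b' c', StarPair m E v t a b c a' b' c' := by
  obtain ⟨a, b, c, hR⟩ := hE.exists_isStar_right hvt hlt.le hlt'
  obtain ⟨a', b', c', hS⟩ := hE.exists_isStar_left hvt hlt hlt'.le
  exact ⟨a, b, c, a', b', c', hR, hS⟩

theorem StarPair.swap (hE : IsLiftedTriangulation m E) (h : StarPair m E v t a b c a' b' c') :
    StarPair m E t (v + m) c' (a' + m) (b' + m) b c (a + m) :=
  ⟨((h.left.rotate hE).rotate hE).rotate hE, (h.right.rotate hE).rotate hE⟩

theorem StarPair.mirror (hE : IsLiftedTriangulation m E) (h : StarPair m E v t a b c a' b' c') :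
    StarPair m (mirror E) (-t) (-v) (-a) (-c + m) (-b + m) (-b') (-a') (-c' + m) :=
  ⟨(h.right.mirror.rotate hE.mirror).rotate hE.mirror, h.left.mirror.rotate hE.mirror⟩

theorem OrderedStarPair.swap (hE : IsLiftedTriangulation m E)
    (h : OrderedStarPair m E v t a b c a' b' c') :
    OrderedStarPair m E t (v + m) c' (a' + m) (b' + m) b c (a + m) :=
  ⟨h.toStarPair.swap hE, h.last_le, by linarith [h.le_snd]⟩

theorem StarPair.ordered_or_mirror_ordered (hE : IsLiftedTriangulation m E)
    (h : StarPair m E v t a b c a' b' c') :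
    OrderedStarPair m E v t a b c a' b' c' ∨
      OrderedStarPair m (Multitriangulation.mirror E)
        (-t) (-v) (-a) (-c + m) (-b + m) (-b') (-a') (-c' + m) := by
  obtain ⟨⟨_, _, _, _, _, hvt, _, hab, hac, _⟩, ⟨_, _, _, _, _, _, _, _, ha'c', hb'c'⟩⟩ := id h
  have : a < a' → c' ≤ b := by
    intro hlt; by_contra
    exact hE.false_of_threeCrossing hvt hab ha'c' (by omega)
  have : a' < a → c ≤ c' := by
    intro hlt; by_contra
    exact hE.false_of_threeCrossing hvt ha'c' hac (by omega)
  have : a < b' → c' ≤ b := by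
    intro hlt; by_contra
    exact hE.false_of_threeCrossing hvt hab hb'c' (by omega)
  have : b' < a → c ≤ c' := by
    intro hlt; by_contra
    exact hE.false_of_threeCrossing hvt hb'c' hac (by omega)
  have hcases : (a ≤ a' ∧ c' ≤ b) ∨ (b' ≤ a ∧ c ≤ c') := by omega
  rcases hcases with ⟨ha, hc⟩ | ⟨ha, hc⟩
  · exact Or.inl ⟨h, ha, hc⟩
  · exact Or.inr ⟨h.mirror hE, by omega, by omega⟩

/-- A non-edge `(x, y)` bisects a star of `E`; being compatible with the remaining edges, it
must bisect a star that loses a side crossed by `(x, y)`. -/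
theorem StarPair.exists_bisected (hE : IsLiftedTriangulation m E) (hP : TranslationInvariant p E)
    (hA : StarPair m E v t a b c a' b' c') {x y : ℤ} (hxy : ¬ E x y) (hlt : x < y)
    (hlt' : y < x + m) (hcomp : Compatible m (removeOrbit m p E v t) x y) :
    ∃ q, p ∣ q ∧ ((x + q = c - m ∧ a < y + q ∧ y + q < t) ∨
      (x + q = b - m ∧ v < y + q ∧ y + q < a) ∨
      (x + q = b' ∧ c' < y + q ∧ y + q < v + m) ∨
      (x + q = a' ∧ t < y + q ∧ y + q < c')) := by
  obtain ⟨s₁, s₂, s₃, s₄, hs, hy, hy'⟩ := hE.exists_isStar_of_not_edge hxy hlt hlt'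
  have hside : InOrbit m p v t s₁ s₃ ∨ InOrbit m p v t s₂ s₄ := by
    by_contra! hno
    exact hcomp _ _ _ _ hs.lt₀₁ hs.lt₁₂ hy hy' hs.lt₃₄ hs.lt₄₀ ⟨hs.edge₁₃, hno.1⟩
      ⟨hs.edge₂₄, hno.2⟩
  have hL := (hA.swap hE).right
  have hs' := hs.rotate hE
  have hs'' := hs'.rotate hE
  rcases hside with ⟨q, hq, ⟨rfl, rfl⟩ | ⟨rfl, rfl⟩⟩ | ⟨q, hq, ⟨rfl, rfl⟩ | ⟨rfl, rfl⟩⟩ <;>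
    refine ⟨-q, (dvd_neg).2 hq, ?_⟩
  · have := hs'.eq_of_same_left hE (hA.right.translate hP hq); omega
  · have := hs'.eq_of_same_left hE (hL.translate hP hq); omega
  · have := hs''.eq_of_same_left hE (hA.right.translate hP hq); omega
  · have := hs''.eq_of_same_left hE (hL.translate hP hq); omega

namespace OrderedStarPair

theorem not_edge_bisector (hE : IsLiftedTriangulation m E)
    (hA : OrderedStarPair m E v t a b c a' b' c') : ¬ E b' c := by
  obtain ⟨⟨⟨_, _, _, _, _, hvt, _, _, _, _⟩, ⟨_, _, _, _, _, _, _, _, ha'c', _⟩⟩, _, _⟩ := hA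
  exact fun h => hE.false_of_threeCrossing hvt ha'c' h (by omega)

theorem inOrbit_bisector (hE : IsLiftedTriangulation m E) (hP : TranslationInvariant p E)
    (hp : p ∣ m) (hA : OrderedStarPair m E v t a b c a' b' c')
    (hsides : SidesIn (removeOrbit m p E v t) v t a b c a' b' c') {x y : ℤ} (hxy : ¬ E x y)
    (hlt : x < y) (hlt' : y < x + m) (hcomp : Compatible m (removeOrbit m p E v t) x y) :
    InOrbit m p b' c x y := by
  obtain ⟨q, hq, hbis⟩ := hA.exists_bisected hE hP hxy hlt hlt' hcomp
  have hcomp' := hP.removeOrbit.compatible x y q hq hcomp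
  have turn := hE.turn.removeOrbit hp (v := v) (t := t)
  obtain ⟨⟨⟨_, _, _, _, _, -, -, -, -, -⟩, ⟨_, _, _, _, _, -, -, -, -, -⟩⟩, _, _⟩ := hA
  rcases hbis with ⟨hx, hay, hyt⟩ | ⟨hx, hvy, hya⟩ | ⟨hx, hcy, hyv⟩ | ⟨hx, hty, hyc⟩ <;>
    rw [hx] at hcomp'
  · rcases lt_trichotomy (y + q) b' with hlt | heq | hlt
    · exact (hcomp' v a b' b (by omega) (by omega) hay hlt (by omega) (by omega) hsides.edge_v_b'
        hsides.edge_a_b).elim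
    · exact ⟨-m - q, dvd_sub ((dvd_neg).2 hp) hq, by omega⟩
    · exact (hcomp' a' b' t c' (by omega) (by omega) hlt hyt (by omega) (by omega)
        hsides.edge_a'_t hsides.edge_b'_c').elim
  · exact (hcomp' (c - m) v a b' (by omega) (by omega) hvy hya (by omega) (by omega)
      (turn.relift hsides.edge_a_c (by omega)) hsides.edge_v_b').elim
  · rcases lt_trichotomy (y + q) c with hlt | heq | hlt
    · exact (hcomp' t c' c (a' + m) (by omega) (by omega) hcy hlt (by omega) (by omega)
        hsides.edge_t_c ((turn _ _).2 hsides.edge_a'_c')).elim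
    · exact ⟨-q, (dvd_neg).2 hq, by omega⟩
    · exact (hcomp' b c (v + m) (a + m) (by omega) (by omega) hlt hyv (by omega) (by omega)
        ((turn _ _).2 hsides.edge_v_b) ((turn _ _).2 hsides.edge_a_c)).elim
  · exact (hcomp' b' t c' c (by omega) (by omega) hty hyc (by omega) (by omega)
      hsides.edge_b'_c' hsides.edge_t_c).elim

theorem compatible_bisector (hE : IsLiftedTriangulation m E)
    (hA : OrderedStarPair m E v t a b c a' b' c') :
    Compatible m (removeOrbit m p E v t) b' c := by
  rintro x y x' y' h₁ h₂ h₃ h₄ h₅ h₆ ⟨hx, hxorbit⟩ ⟨hy, -⟩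
  have hR := (hA.right.rotate hE).rotate hE
  have hL := hA.left
  obtain ⟨⟨⟨_, _, _, _, _, hvt, _, _, hac, htc⟩, ⟨_, _, _, _, _, hvb', _, _, _, hb'c'⟩⟩, _, _⟩ :=
    hA
  have hxv : x' ≤ v + m := by
    by_contra
    exact hE.false_of_threeCrossing ((hE.turn _ _).2 hvb') hx hy (by omega)
  have hxt : x ≤ t := by
    by_contra
    exact hE.false_of_threeCrossing htc hx hy (by omega)
  have hc'y : c' ≤ y := by
    by_contra
    exact hE.false_of_threeCrossing hb'c' hx hy (by omega)
  have hay : a + m ≤ y' := by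
    by_contra
    exact hE.false_of_threeCrossing hx hy ((hE.turn _ _).2 hac) (by omega)
  rcases hxt.lt_or_eq with hxt | rfl <;> rcases hxv.lt_or_eq with hxv | rfl
  · exact hE.false_of_threeCrossing hx ((hE.turn _ _).2 hvt) hy (by omega)
  · exact hL.not_edge_of_mem_Ioo hE h₁ hxt ((hE.turn _ _).1 hx)
  · exact hR.not_edge_of_mem_Ioo hE h₄ hxv hx
  · exact hxorbit ⟨0, dvd_zero p, by omega⟩

theorem isLiftedTriangulation_flipOrbit (hE : IsLiftedTriangulation m E)
    (hP : TranslationInvariant p E) (hp : p ∣ m) (hA : OrderedStarPair m E v t a b c a' b' c')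
    (hsides : SidesIn (removeOrbit m p E v t) v t a b c a' b' c')
    (hcross : ∀ i j x y z w, InOrbit m p b' c i j → InOrbit m p b' c x y →
      flipOrbit m p E v t b' c z w →
      ¬ (i < x ∧ x < z ∧ z < j ∧ j < y ∧ y < w ∧ w < i + m)) :
    IsLiftedTriangulation m (flipOrbit m p E v t b' c) := by
  have hinner : ∀ {i j}, _ → _ → _ → _ → InOrbit m p b' c i j :=
    hA.inOrbit_bisector hE hP hp hsides
  have hcomp := hA.compatible_bisector (p := p) hE
  obtain ⟨⟨⟨_, _, _, _, _, -, -, -, -, -⟩, ⟨_, _, _, _, _, -, -, -, -, -⟩⟩, _, _⟩ := hA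
  refine Multitriangulation.isLiftedTriangulation_flipOrbit hE hP hp (by omega) (by omega) hcomp
    hcross (fun hvt => ?_) (fun i j hlt hlt' hij h =>
      hinner hij hlt hlt' (h.mono fun _ _ => Or.inl))
  exact hvt a' b' c' c (by omega) (by omega) (by omega) (by omega) (by omega) (by omega)
    (Or.inl hsides.edge_a'_c') (Or.inr (InOrbit.refl m p b' c))

end OrderedStarPair

theorem dvd_cases {q : ℤ} (hm : 0 < m) (h : m ∣ q) :
    q ≤ -(2 * m) ∨ q = -m ∨ q = 0 ∨ q = m ∨ 2 * m ≤ q := by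
  obtain ⟨k, rfl⟩ := h
  obtain hk | rfl | rfl | rfl | hk : k ≤ -2 ∨ k = -1 ∨ k = 0 ∨ k = 1 ∨ 2 ≤ k := by omega
  · exact Or.inl (by nlinarith)
  · simp
  · simp
  · simp
  · exact Or.inr (Or.inr (Or.inr (Or.inr (by nlinarith))))

namespace OrderedStarPair

theorem isLiftedTriangulation_flip (hE : IsLiftedTriangulation m E)
    (hA : OrderedStarPair m E v t a b c a' b' c') :
    IsLiftedTriangulation m (flipOrbit m m E v t b' c) := by
  have hm : 0 < m := by linarith [hE.lt hA.right.edge₀₂, hE.lt_add hA.right.edge₀₂]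
  obtain ⟨⟨⟨_, _, _, _, _, _, hvb, hab, hac, htc⟩,
    ⟨_, _, _, _, _, hvb', _, ha't, ha'c', hb'c'⟩⟩, _, _⟩ := id hA
  have hsides : SidesIn (removeOrbit m m E v t) v t a b c a' b' c' := by
    refine ⟨⟨hvb, ?_⟩, ⟨hab, ?_⟩, ⟨hac, ?_⟩, ⟨htc, ?_⟩, ⟨hvb', ?_⟩, ⟨ha't, ?_⟩, ⟨ha'c', ?_⟩,
      ⟨hb'c', ?_⟩⟩ <;>
    · rintro ⟨q, hq, hq'⟩
      have := dvd_cases hm hq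
      omega
  refine hA.isLiftedTriangulation_flipOrbit hE hE.turn.translationInvariant dvd_rfl hsides ?_
  rintro i j x y z w ⟨q, hq, hq'⟩ ⟨r, hr, hr'⟩ - _
  have := dvd_cases hm (dvd_sub hq hr)
  omega

theorem inOrbit_bisector_translate (hE : IsLiftedTriangulation m E)
    (hP : TranslationInvariant p E) (hp : p ∣ m) (hA : OrderedStarPair m E v t a b c a' b' c')
    {s s' : ℤ} (hs : p ∣ s) (hs' : p ∣ s')
    (h : InOrbit m m (v + s) (t + s) (v + s') (t + s')) :
    InOrbit m m (b' + s) (c + s) (b' + s') (c + s') := by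
  obtain ⟨q, hq, h | h⟩ := h
  · exact ⟨q, hq, by omega⟩
  have hd : p ∣ s' - s - q := dvd_sub (dvd_sub hs' hs) (hp.trans hq)
  have hv : v + (s' - s - q) = t := by omega
  have ht : t + (s' - s - q) = v + m := by omega
  have hR := hA.right.translate hP hd
  have hL := hA.swap hE
  rw [hv, ht] at hR
  have := hR.eq_of_same_left hE hL.right
  exact ⟨q, hq, by omega⟩

theorem exists_isPartialFlip_of_translate (hE : IsLiftedTriangulation m E)
    (hP : TranslationInvariant p E) (hp : p ∣ m) (hA : OrderedStarPair m E v t a b c a' b' c')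
    (hsides : SidesIn (removeOrbit m p E v t) v t a b c a' b' c')
    (hF : IsPartialFlip m p E v t b' c F) {s : ℤ} (hs : p ∣ s) :
    ∃ F', IsPartialFlip m p E v t b' c F' ∧ F' (b' + s) (c + s) ∧
      ∀ k l, flipOrbit m p E v t b' c k l → F k l → F' k l := by
  by_cases hnew : F (b' + s) (c + s)
  · exact ⟨F, hF, hnew, fun _ _ _ h => h⟩
  have hvt := (hF.edge_or_edge s hs).resolve_right hnew
  have hAF : OrderedStarPair m F (v + s) (t + s) (a + s) (b + s) (c + s) (a' + s) (b' + s)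
      (c' + s) := by
    have side : ∀ {i j}, removeOrbit m p E v t i j → F (i + s) (j + s) :=
      fun h => hF.of_removeOrbit _ _ (hP.removeOrbit _ _ _ hs h)
    obtain ⟨h₁, h₂, h₃, h₄, h₅, h₆, h₇, h₈⟩ := hsides
    obtain ⟨⟨⟨_, _, _, _, _, -, -, -, -, -⟩, ⟨_, _, _, _, _, -, -, -, -, -⟩⟩, _, _⟩ := hA
    exact ⟨⟨⟨by omega, by omega, by omega, by omega, by omega, hvt, side h₁, side h₂, side h₃,
      side h₄⟩, ⟨by omega, by omega, by omega, by omega, by omega, side h₅, hvt, side h₆, side h₇,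
      side h₈⟩⟩, by omega, by omega⟩
  have orbit_of_orbit : ∀ {i j}, InOrbit m m (v + s) (t + s) i j → InOrbit m p v t i j := by
    rintro i j ⟨q, hq, hq'⟩
    exact ⟨s + q, dvd_add hs (hp.trans hq), by omega⟩
  have keep : ∀ k l, flipOrbit m p E v t b' c k l → F k l →
      flipOrbit m m F (v + s) (t + s) (b' + s) (c + s) k l := by
    refine fun k l h hkl => Or.inl ⟨hkl, fun ho => ?_⟩
    have hold := orbit_of_orbit ho
    rcases h with h | h
    · exact h.2 hold
    · exact hA.not_edge_bisector hE
        ((h.symm hp).edge hE.turn hP (hold.edge hE.turn hP hA.right.edge₀₂))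
  refine ⟨_, ⟨hAF.isLiftedTriangulation_flip hF.isLifted, fun i j h =>
    keep i j (Or.inl h) (hF.of_removeOrbit i j h), fun s' hs' => ?_⟩,
    Or.inr (InOrbit.refl _ _ _ _), keep⟩
  rcases hF.edge_or_edge s' hs' with h | h
  · by_cases ho : InOrbit m m (v + s) (t + s) (v + s') (t + s')
    · exact Or.inr (Or.inr (hA.inOrbit_bisector_translate hE hP hp hs hs' ho))
    · exact Or.inl (Or.inl ⟨h, ho⟩)
  · exact Or.inr (keep _ _ (Or.inr (InOrbit.translationInvariant _ _ _ hs' (InOrbit.refl _ _ _ _)))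
      h)

theorem exists_isPartialFlip_of_flipOrbit (hE : IsLiftedTriangulation m E)
    (hP : TranslationInvariant p E) (hp : p ∣ m) (hA : OrderedStarPair m E v t a b c a' b' c')
    (hsides : SidesIn (removeOrbit m p E v t) v t a b c a' b' c')
    (hF : IsPartialFlip m p E v t b' c F) {i j : ℤ} (hij : flipOrbit m p E v t b' c i j) :
    ∃ F', IsPartialFlip m p E v t b' c F' ∧ F' i j ∧
      ∀ k l, flipOrbit m p E v t b' c k l → F k l → F' k l := by
  rcases hij with h | ⟨q, hq, h⟩
  · exact ⟨F, hF, hF.of_removeOrbit i j h, fun _ _ _ hkl => hkl⟩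
  · obtain ⟨F', hF', hnew, hkeep⟩ :=
      hA.exists_isPartialFlip_of_translate hE hP hp hsides hF hq
    exact ⟨F', hF', hF'.isLifted.relift hnew (by omega), hkeep⟩

/-- Three given edges of the flipped set lie in a common triangulation, reached by flipping
translates one at a time; so they do not form a 3-crossing. -/
theorem hasUniqueFlip (hE : IsLiftedTriangulation m E) (hP : TranslationInvariant p E)
    (hp : p ∣ m) (hA : OrderedStarPair m E v t a b c a' b' c')
    (hsides : SidesIn (removeOrbit m p E v t) v t a b c a' b' c') : HasUniqueFlip m p E v t := by
  have step := fun F hF i j => hA.exists_isPartialFlip_of_flipOrbit (F := F) (i := i) (j := j)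
    hE hP hp hsides hF
  have hvt := hA.right.edge₀₂
  have hE₀ : IsPartialFlip m p E v t b' c E :=
    ⟨hE, fun _ _ h => h.1, fun s hs => Or.inl (hP _ _ s hs hvt)⟩
  refine HasUniqueFlip.of_flipOrbit hE hP hp hvt (hA.not_edge_bisector hE)
    (hA.isLiftedTriangulation_flipOrbit hE hP hp hsides ?_) ?_
  · intro i j x y z w hij hxy hzw hord
    obtain ⟨F₁, hF₁, hij₁, -⟩ := step E hE₀ i j (Or.inr hij)
    obtain ⟨F₂, hF₂, hxy₂, hkeep₂⟩ := step F₁ hF₁ x y (Or.inr hxy)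
    obtain ⟨F₃, hF₃, hzw₃, hkeep₃⟩ := step F₂ hF₂ z w hzw
    exact hF₃.isLifted.false_of_threeCrossing
      (hkeep₃ i j (Or.inr hij) (hkeep₂ i j (Or.inr hij) hij₁)) (hkeep₃ x y (Or.inr hxy) hxy₂)
      hzw₃ hord
  · intro E' hE' i j hij hij'
    exact hA.inOrbit_bisector hE hP hp hsides hij' (hE'.isLifted.lt hij)
      (hE'.isLifted.lt_add hij) ((hE'.isLifted.compatible hij).mono hE'.of_removeOrbit)

end OrderedStarPair

end GenericFlip

/-! ### Degenerate flips -/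

/-- The exceptional star pairs, in which a side of an adjacent star lies in the orbit of the edge
`(v, t)` itself. -/
abbrev DegenerateStarPair (n : ℤ) (E : ℤ → ℤ → Prop) (v t c : ℤ) : Prop :=
  OrderedStarPair (4 * n) E v t (t - n) (v + 3 * n) c (c - 3 * n) (v + n) (t + n)

section DegenerateFlip

variable {n : ℤ} {E : ℤ → ℤ → Prop} {v t a b c a' b' c' : ℤ}

theorem exists_eq_mul_of_dvd {q k l : ℤ} (hn : 0 < n) (h : n ∣ q) (hlo : k * n < q)
    (hhi : q < l * n) : ∃ r, k < r ∧ r < l ∧ q = r * n := by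
  obtain ⟨r, rfl⟩ := h
  rw [mul_comm] at hlo hhi ⊢
  exact ⟨r, lt_of_mul_lt_mul_left (by linarith) hn.le,
    lt_of_mul_lt_mul_left (by linarith) hn.le, rfl⟩

theorem eq_of_dvd_of_lt_two_mul {q : ℤ} (h : n ∣ q) (hlo : 0 < q) (hhi : q < 2 * n) : q = n := by
  obtain ⟨r, hr, hr', rfl⟩ := exists_eq_mul_of_dvd (k := 0) (by omega) h (by omega) hhi
  obtain rfl : r = 1 := by omega
  exact one_mul n

theorem five_mul_ne_mul_of_dvd {q k : ℤ} (hn : n ≠ 0) (h : n ∣ q) (hk : ¬ 5 ∣ k) :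
    5 * q ≠ k * n := by
  obtain ⟨r, rfl⟩ := h
  intro heq
  exact hk ⟨r, mul_right_cancel₀ hn (by linarith)⟩

namespace StarPair

/- In the following four lemmas, comparing a rotation of the right star with its own translate by
`q` would give `5 * q = k * n` with `5 ∤ k`. -/
theorem not_inOrbit_v_b (hE : IsLiftedTriangulation (4 * n) E) (hP : TranslationInvariant n E)
    (hA : StarPair (4 * n) E v t a b c a' b' c') : ¬ InOrbit (4 * n) n v t v b := by
  intro ho
  have hR := ((hA.right.rotate hE).rotate hE).rotate hE
  have := hA.right.lt₀₁
  have := hA.right.lt₁₂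
  have := hA.right.lt₂₃
  have := hA.right.lt₃₄
  have := hA.right.lt₄₀
  obtain ⟨q, hq, ⟨hb, hv⟩ | ⟨hb, hv⟩⟩ :=
    (InOrbit.turnInvariant (dvd_mul_left n 4) _ _).2 ho
  · rw [hb, hv] at hR
    have := hR.eq_of_same_left hE (hA.right.translate hP hq)
    exact five_mul_ne_mul_of_dvd (k := 12) (by omega) hq (by decide) (by omega)
  · omega

theorem not_inOrbit_t_c (hE : IsLiftedTriangulation (4 * n) E) (hP : TranslationInvariant n E)
    (hA : StarPair (4 * n) E v t a b c a' b' c') : ¬ InOrbit (4 * n) n v t t c := by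
  rintro ⟨q, hq, ⟨ht, hc⟩ | ⟨ht, hc⟩⟩
  all_goals
    have := hA.right.lt₀₁
    have := hA.right.lt₁₂
    have := hA.right.lt₂₃
    have := hA.right.lt₃₄
    have := hA.right.lt₄₀
  · have hR := (hA.right.rotate hE).rotate hE
    have hR' := hA.right.translate hP hq
    rw [← ht, ← hc] at hR'
    have := hR.eq_of_same_left hE hR'
    exact five_mul_ne_mul_of_dvd (k := 8) (by omega) hq (by decide) (by omega)
  · omega

end StarPair

namespace OrderedStarPair

theorem degenerate_of_inOrbit_a_b (hE : IsLiftedTriangulation (4 * n) E)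
    (hP : TranslationInvariant n E) (hA : OrderedStarPair (4 * n) E v t a b c a' b' c')
    (ho : InOrbit (4 * n) n v t a b) : DegenerateStarPair n E v t c := by
  have hR := hA.right.rotate hE
  have hS := (hA.swap hE).right
  obtain ⟨⟨⟨_, _, _, _, _, -, -, -, -, -⟩, ⟨_, _, _, _, _, -, -, -, -, -⟩⟩, _, _⟩ := id hA
  obtain ⟨q, hq, ⟨ha, hb⟩ | ⟨ha, hb⟩⟩ := ho
  · have hR' := hA.right.translate hP hq
    rw [← ha, ← hb] at hR'
    have := hR.eq_of_same_left hE hR'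
    exact (five_mul_ne_mul_of_dvd (k := 4) (by omega) hq (by decide) (by omega)).elim
  · have hS' := hS.translate hP hq
    rw [← ha, ← hb] at hS'
    have := hR.eq_of_same_left hE hS'
    have := eq_of_dvd_of_lt_two_mul ((dvd_neg).2 hq) (by omega) (by omega)
    convert hA using 1 <;> omega

theorem degenerate_swap_of_inOrbit_a_c (hE : IsLiftedTriangulation (4 * n) E)
    (hP : TranslationInvariant n E) (hA : OrderedStarPair (4 * n) E v t a b c a' b' c')
    (ho : InOrbit (4 * n) n v t a c) : DegenerateStarPair n E t (v + 4 * n) (b' + 4 * n) := by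
  have hR := (((hA.right.rotate hE).rotate hE).rotate hE).rotate hE
  have hS := hA.swap hE
  obtain ⟨⟨⟨_, _, _, _, _, -, -, -, -, -⟩, ⟨_, _, _, _, _, -, -, -, -, -⟩⟩, _, _⟩ := id hA
  obtain ⟨q, hq, ⟨hc, ha⟩ | ⟨hc, ha⟩⟩ :=
    (InOrbit.turnInvariant (dvd_mul_left n 4) _ _).2 ho
  · have hR' := hA.right.translate hP hq
    rw [← hc, ← ha] at hR'
    have := hR.eq_of_same_left hE hR'
    exact (five_mul_ne_mul_of_dvd (k := 16) (by omega) hq (by decide) (by omega)).elim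
  · have hS' := hS.right.translate hP hq
    rw [← hc, ← ha] at hS'
    have := hR.eq_of_same_left hE hS'
    have := eq_of_dvd_of_lt_two_mul hq (by omega) (by omega)
    convert hS using 1 <;> omega

end OrderedStarPair

namespace DegenerateStarPair

theorem bounds (hA : DegenerateStarPair n E v t c) :
    0 < n ∧ v + n < t ∧ t < v + 2 * n ∧ t + 2 * n ≤ c ∧ c < v + 4 * n := by
  obtain ⟨⟨⟨_, _, _, _, _, -, -, -, -, -⟩, ⟨_, _, _, _, _, -, -, -, -, -⟩⟩, _, _⟩ := hA
  omega

/-- Both lifts `(x, y)` and `(y, x + 4 * n)` of the same edge, translated by `q` and `q + r`,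
bisect one of the adjacent stars. -/
theorem bisector_cases {x y r : ℤ} (hA : DegenerateStarPair n E v t c) (hr : n ∣ r)
    (hxy : (x = c - 4 * n ∧ t - n < y ∧ y < t) ∨ (x = v + 3 * n - 4 * n ∧ v < y ∧ y < t - n) ∨
      (x = v + n ∧ t + n < y ∧ y < v + 4 * n) ∨ (x = c - 3 * n ∧ t < y ∧ y < t + n))
    (hyx : (y + r = c - 4 * n ∧ t - n < x + 4 * n + r ∧ x + 4 * n + r < t) ∨
      (y + r = v + 3 * n - 4 * n ∧ v < x + 4 * n + r ∧ x + 4 * n + r < t - n) ∨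
      (y + r = v + n ∧ t + n < x + 4 * n + r ∧ x + 4 * n + r < v + 4 * n) ∨
      (y + r = c - 3 * n ∧ t < x + 4 * n + r ∧ x + 4 * n + r < t + n)) :
    (x = c - 4 * n ∧ y = v + n) ∨ (x = v + n ∧ y = c) ∨ (x = c - 3 * n ∧ y = v + 2 * n) ∨
      (x = v + n ∧ y = v + 3 * n) := by
  obtain ⟨hn, hb⟩ := hA.bounds
  rcases hxy with hxy | hxy | hxy | hxy <;> rcases hyx with hyx | hyx | hyx | hyx <;>
  · obtain ⟨k, hk, hk', rfl⟩ := exists_eq_mul_of_dvd (k := -6) (l := 6) hn hr (by omega) (by omega)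
    interval_cases k <;> omega

theorem inOrbit_bisector_or_inOrbit {i j : ℤ} (hE : IsLiftedTriangulation (4 * n) E)
    (hP : TranslationInvariant n E) (hA : DegenerateStarPair n E v t c) (hij : ¬ E i j)
    (hlt : i < j) (hlt' : j < i + 4 * n)
    (hcomp : Compatible (4 * n) (removeOrbit (4 * n) n E v t) i j) :
    InOrbit (4 * n) n (v + n) c i j ∨ InOrbit (4 * n) n v (v + 2 * n) i j := by
  have hn : n ∣ 4 * n := dvd_mul_left n 4
  obtain ⟨q, hq, hb⟩ := hA.exists_bisected hE hP hij hlt hlt' hcomp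
  obtain ⟨q', hq', hb'⟩ := hA.exists_bisected hE hP ((hE.turn i j).not.2 hij) hlt' (by omega)
    (((hE.turn.removeOrbit hn).compatible i j).2 hcomp)
  rw [show j + q' = j + q + (q' - q) by ring] at hb'
  rw [show i + 4 * n + q' = i + q + 4 * n + (q' - q) by ring] at hb'
  have hqn := (dvd_neg).2 hq
  rcases bisector_cases hA (dvd_sub hq' hq) hb hb' with h | h | h | h
  · exact Or.inl ⟨-q - 4 * n, dvd_sub hqn hn, by omega⟩
  · exact Or.inl ⟨-q, hqn, by omega⟩
  · exact Or.inl ⟨-q - 3 * n, dvd_sub hqn (dvd_mul_left n 3), by omega⟩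
  · exact Or.inr ⟨-q + n, dvd_add hqn dvd_rfl, by omega⟩

theorem not_flipOrbit_across_short_translates {i j : ℤ} (hE : IsLiftedTriangulation (4 * n) E)
    (hA : DegenerateStarPair n E v t c) (hi : c - 4 * n < i) (hi' : i < c - 3 * n)
    (hj : v + n < j) (hj' : j < v + 2 * n) :
    ¬ flipOrbit (4 * n) n E v t (v + n) c i j := by
  have hR := (hA.right.rotate hE).rotate hE
  have hL := ((hA.left.rotate hE).rotate hE).rotate hE
  obtain ⟨hn, hb⟩ := hA.bounds
  rintro (⟨hij, ho⟩ | ⟨q, hq, h⟩)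
  · rcases lt_trichotomy j t with hjt | rfl | hjt
    · rcases lt_trichotomy i v with hiv | rfl | hiv
      · exact hE.false_of_threeCrossing hij hA.right.edge₀₂ hA.left.edge₁₄ (by omega)
      · exact hA.left.not_edge_of_mem_Ioo hE hj hjt hij
      · exact hE.false_of_threeCrossing hij hA.left.edge₁₃ hA.left.edge₂₄ (by omega)
    · rcases lt_trichotomy i v with hiv | rfl | hiv
      · exact hR.not_edge_of_mem_Ioo hE (t := i + 4 * n) (by omega) (by omega)
          ((hE.turn _ _).2 hij)
      · exact ho (InOrbit.refl _ _ _ _)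
      · exact hL.not_edge_of_mem_Ioo hE (t := i + 4 * n) (by omega) (by omega)
          ((hE.turn _ _).2 hij)
    · exact hE.false_of_threeCrossing (a := c - 4 * n) (d := t)
        (hE.relift hA.right.edge₂₄ (by omega)) hij hA.left.edge₁₄ (by omega)
  · obtain ⟨k, hk, hk', rfl⟩ := exists_eq_mul_of_dvd (k := -6) (l := 6) hn hq (by omega) (by omega)
    interval_cases k <;> omega

theorem not_flipOrbit_across_long_translates {i j : ℤ} (hE : IsLiftedTriangulation (4 * n) E)
    (hP : TranslationInvariant n E) (hA : DegenerateStarPair n E v t c) (hi : c - 3 * n < i)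
    (hi' : i < v + n) (hj : v + 2 * n < j) (hj' : j < c) :
    ¬ flipOrbit (4 * n) n E v t (v + n) c i j := by
  have hR := ((hA.right.rotate hE).rotate hE).translate hP (dvd_refl n)
  obtain ⟨hn, hb⟩ := hA.bounds
  rintro (⟨hij, ho⟩ | ⟨q, hq, h⟩)
  · rcases lt_trichotomy j (t + n) with hjt | rfl | hjt
    · exact hE.false_of_threeCrossing hij hA.left.edge₂₄ (hP _ _ n dvd_rfl hA.left.edge₂₄)
        (by omega)
    · exact hR.not_edge_of_mem_Ioo hE (t := i + 4 * n) (by omega) (by omega)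
        ((hE.turn _ _).2 hij)
    · exact hE.false_of_threeCrossing hA.right.edge₀₂ hA.left.edge₁₄ hij (by omega)
  · obtain ⟨k, hk, hk', rfl⟩ := exists_eq_mul_of_dvd (k := -6) (l := 6) hn hq (by omega) (by omega)
    interval_cases k <;> omega

theorem not_threeCrossing_flipOrbit {i j x y z w : ℤ} (hE : IsLiftedTriangulation (4 * n) E)
    (hP : TranslationInvariant n E) (hA : DegenerateStarPair n E v t c)
    (hij : InOrbit (4 * n) n (v + n) c i j) (hxy : InOrbit (4 * n) n (v + n) c x y)
    (hzw : flipOrbit (4 * n) n E v t (v + n) c z w) :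
    ¬ (i < x ∧ x < z ∧ z < j ∧ j < y ∧ y < w ∧ w < i + 4 * n) := by
  rintro ⟨_, _, _, _, _, _⟩
  have hn : n ∣ 4 * n := dvd_mul_left n 4
  obtain ⟨q, hq, hij⟩ := hij
  obtain ⟨s, hs, hxy⟩ := hxy
  obtain ⟨hn0, hb⟩ := hA.bounds
  have hq' := (dvd_neg).2 hq
  have hwz := (hE.turn.flipOrbit hn).relift hzw (i' := w - 4 * n) (j' := z) (by omega)
  obtain ⟨k, hk, hk', hsq⟩ := exists_eq_mul_of_dvd (k := -6) (l := 6) hn0 (dvd_sub hs hq)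
    (by omega) (by omega)
  rcases hij with hij | hij <;> rcases hxy with hxy | hxy
  · obtain rfl : k = 1 := by interval_cases k <;> omega
    exact hA.not_flipOrbit_across_long_translates hE hP (by omega) (by omega) (by omega) (by omega)
      (hP.flipOrbit _ _ (-q) hq' hwz)
  · obtain rfl : k = -1 := by interval_cases k <;> omega
    exact hA.not_flipOrbit_across_short_translates hE (by omega) (by omega) (by omega) (by omega)
      (hP.flipOrbit _ _ (-q - 3 * n) (dvd_sub hq' (dvd_mul_left n 3)) hzw)
  · obtain rfl : k = 3 := by interval_cases k <;> omega
    exact hA.not_flipOrbit_across_short_translates hE (by omega) (by omega) (by omega) (by omega)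
      (hP.flipOrbit _ _ (-q - 3 * n) (dvd_sub hq' (dvd_mul_left n 3)) hwz)
  · obtain rfl : k = 1 := by interval_cases k <;> omega
    exact hA.not_flipOrbit_across_long_translates hE hP (by omega) (by omega) (by omega) (by omega)
      (hP.flipOrbit _ _ (-q - 4 * n) (dvd_sub hq' hn) hzw)

theorem removeOrbit_translate (hE : IsLiftedTriangulation (4 * n) E)
    (hP : TranslationInvariant n E) (hA : DegenerateStarPair n E v t c) :
    removeOrbit (4 * n) n E v t t c ∧ removeOrbit (4 * n) n E v t (c - 3 * n) (t + n) := by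
  have hn : n ∣ 4 * n := dvd_mul_left n 4
  have htc : removeOrbit (4 * n) n E v t t c :=
    ⟨hA.right.edge₂₄, hA.toStarPair.not_inOrbit_t_c hE hP⟩
  refine ⟨htc, ?_⟩
  have h := hP.removeOrbit.sub (dvd_mul_left n 3) ((hE.turn.removeOrbit hn _ _).2 htc)
  rwa [show t + 4 * n - 3 * n = t + n by ring] at h

theorem isLiftedTriangulation_flipOrbit (hE : IsLiftedTriangulation (4 * n) E)
    (hP : TranslationInvariant n E) (hA : DegenerateStarPair n E v t c) :
    IsLiftedTriangulation (4 * n) (flipOrbit (4 * n) n E v t (v + n) c) := by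
  have hn : n ∣ 4 * n := dvd_mul_left n 4
  obtain ⟨_, hb⟩ := hA.bounds
  have hkept := (hA.removeOrbit_translate hE hP).2
  refine Multitriangulation.isLiftedTriangulation_flipOrbit hE hP hn (by omega) (by omega)
    (hA.compatible_bisector hE)
    (fun i j x y z w hij hxy hzw => hA.not_threeCrossing_flipOrbit hE hP hij hxy hzw)
    (fun hvt => ?_) (fun i j hlt hlt' hij hcomp => ?_)
  · exact hvt (c - 3 * n) (v + n) (t + n) c (by omega) (by omega) (by omega) (by omega)
      (by omega) (by omega) (Or.inl hkept) (Or.inr (InOrbit.refl _ _ _ _))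
  · refine (hA.inOrbit_bisector_or_inOrbit hE hP hij hlt hlt'
      (hcomp.mono fun _ _ => Or.inl)).resolve_right fun ho => ?_
    exact (ho.symm hn).edge (hE.turn.flipOrbit hn).compatible hP.flipOrbit.compatible hcomp
      (c - 3 * n) (c - 2 * n) (t + n) (v + 3 * n) (by omega) (by omega) (by omega)
      (by omega) (by omega) (by omega) (Or.inl hkept)
      (Or.inr ⟨-(2 * n), (dvd_neg).2 (dvd_mul_left n 2), by omega⟩)

theorem hasUniqueFlip (hE : IsLiftedTriangulation (4 * n) E) (hP : TranslationInvariant n E)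
    (hA : DegenerateStarPair n E v t c) : HasUniqueFlip (4 * n) n E v t := by
  have hn : n ∣ 4 * n := dvd_mul_left n 4
  obtain ⟨_, hb⟩ := hA.bounds
  refine HasUniqueFlip.of_flipOrbit hE hP hn hA.right.edge₀₂ (hA.not_edge_bisector hE)
    (hA.isLiftedTriangulation_flipOrbit hE hP) fun E' hE' i j hij hij' => ?_
  have hE'l := hE'.isLifted
  refine (hA.inOrbit_bisector_or_inOrbit hE hP hij' (hE'l.lt hij) (hE'l.lt_add hij)
    ((hE'l.compatible hij).mono hE'.of_removeOrbit)).resolve_right fun ho => ?_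
  -- `(v, v + 2 * n)` would form a 3-crossing with its translate by `n` and `(t, c)`.
  have hnew := (ho.symm hn).edge hE'l.turn hE'.translationInvariant hij
  exact hE'l.false_of_threeCrossing hnew (hE'.translationInvariant _ _ n dvd_rfl hnew)
    (hE'.of_removeOrbit _ _ (hA.removeOrbit_translate hE hP).1) (by omega)

end DegenerateStarPair

namespace OrderedStarPair

theorem hasUniqueFlip_of_inOrbit (hE : IsLiftedTriangulation (4 * n) E)
    (hP : TranslationInvariant n E) (hA : OrderedStarPair (4 * n) E v t a b c a' b' c')
    (ho : InOrbit (4 * n) n v t v b ∨ InOrbit (4 * n) n v t a b ∨ InOrbit (4 * n) n v t a c ∨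
      InOrbit (4 * n) n v t t c) : HasUniqueFlip (4 * n) n E v t := by
  rcases ho with ho | ho | ho | ho
  · exact (hA.toStarPair.not_inOrbit_v_b hE hP ho).elim
  · exact (hA.degenerate_of_inOrbit_a_b hE hP ho).hasUniqueFlip hE hP
  · exact ((hA.degenerate_swap_of_inOrbit_a_c hE hP ho).hasUniqueFlip hE hP).of_turn
      (dvd_mul_left n 4)
  · exact (hA.toStarPair.not_inOrbit_t_c hE hP ho).elim

theorem hasUniqueFlip_of_four_mul (hE : IsLiftedTriangulation (4 * n) E)
    (hP : TranslationInvariant n E) (hA : OrderedStarPair (4 * n) E v t a b c a' b' c') :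
    HasUniqueFlip (4 * n) n E v t := by
  have hn : n ∣ 4 * n := dvd_mul_left n 4
  by_contra hno
  have hR := fun h => hno (hA.hasUniqueFlip_of_inOrbit hE hP h)
  have hL := fun h => hno (((hA.swap hE).hasUniqueFlip_of_inOrbit hE hP h).of_turn hn)
  have turn := InOrbit.turnInvariant (v := v) (t := t) hn
  have turned : ∀ {i j}, InOrbit (4 * n) n v t i j → InOrbit (4 * n) n t (v + 4 * n) i j :=
    (InOrbit.congr_left hn ((turn _ _).2 (InOrbit.refl _ _ _ _))).1
  obtain ⟨⟨⟨-, -, -, -, -, -, hvb, hab, hac, htc⟩, ⟨-, -, -, -, -, hvb', -, ha't, ha'c', hb'c'⟩⟩,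
    -, -⟩ := id hA
  refine hno (hA.hasUniqueFlip hE hP hn ⟨⟨hvb, fun h => ?_⟩, ⟨hab, fun h => ?_⟩,
    ⟨hac, fun h => ?_⟩, ⟨htc, fun h => ?_⟩, ⟨hvb', fun h => ?_⟩, ⟨ha't, fun h => ?_⟩,
    ⟨ha'c', fun h => ?_⟩, ⟨hb'c', fun h => ?_⟩⟩)
  · exact hR (Or.inl h)
  · exact hR (Or.inr (Or.inl h))
  · exact hR (Or.inr (Or.inr (Or.inl h)))
  · exact hR (Or.inr (Or.inr (Or.inr h)))
  · exact hL (Or.inr (Or.inr (Or.inr (turned (InOrbit.translationInvariant _ _ _ hn h)))))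
  · exact hL (Or.inl (turned ((turn _ _).2 h)))
  · exact hL (Or.inr (Or.inl (turned ((turn _ _).2 h))))
  · exact hL (Or.inr (Or.inr (Or.inl (turned ((turn _ _).2 h)))))

end OrderedStarPair

theorem IsLiftedTriangulation.hasUniqueFlip (hE : IsLiftedTriangulation (4 * n) E)
    (hP : TranslationInvariant n E) (hvt : E v t) (hlt : v + 2 < t) (hlt' : t < v + 4 * n - 2) :
    HasUniqueFlip (4 * n) n E v t := by
  obtain ⟨a, b, c, a', b', c', hA⟩ := hE.exists_starPair hvt hlt hlt'
  rcases hA.ordered_or_mirror_ordered hE with hA | hA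
  · exact hA.hasUniqueFlip_of_four_mul hE hP
  · exact (hA.hasUniqueFlip_of_four_mul hE.mirror hP.mirror).of_mirror (dvd_mul_left n 4)

end DegenerateFlip

/-! ### Counting edge orbits -/

section Counting

open Classical in
/-- The edges of `E` with length in `L` and left end in `[0, p)`: if `E` is invariant under
translation by `p`, they represent its edges of length in `L` up to translation. -/
noncomputable def edgeReps (m p : ℤ) (E : ℤ → ℤ → Prop) (L : Set ℤ) : Finset (ℤ × ℤ) :=
  (Finset.Ico 0 p ×ˢ Finset.Ico 0 (p + m)).filter fun x => E x.1 x.2 ∧ x.2 - x.1 ∈ L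

open Classical in
/-- The stars of `E` with first vertex in `[0, p)`: if `E` is invariant under translation by `p`,
they represent its stars, with a chosen first vertex, up to translation. -/
noncomputable def starReps (m p : ℤ) (E : ℤ → ℤ → Prop) : Finset (Fin 5 → ℤ) :=
  (Finset.Icc 0 fun _ => p + m).filter fun s =>
    0 ≤ s 0 ∧ s 0 < p ∧ IsStar m E (s 0) (s 1) (s 2) (s 3) (s 4)

/-- The representative in `starReps m p E` of the star `s` with its first vertex changed to
`s 1`. -/
def rotateRep (m p : ℤ) (s : Fin 5 → ℤ) : Fin 5 → ℤ :=
  fun i => (![s 1, s 2, s 3, s 4, s 0 + m] : Fin 5 → ℤ) i - p * (s 1 / p)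

variable {m p n : ℤ} {E : ℤ → ℤ → Prop} {L L' : Set ℤ}

theorem eq_of_dvd_sub_of_lt {v v' : ℤ} (h : p ∣ v - v') (hv : 0 ≤ v) (hv' : v < p)
    (hw : 0 ≤ v') (hw' : v' < p) : v = v' :=
  sub_eq_zero.1 (Int.eq_zero_of_abs_lt_dvd h (abs_lt.2 ⟨by omega, by omega⟩))

theorem sub_mul_ediv_mem_Ico (hp : 0 < p) (x : ℤ) : x - p * (x / p) ∈ Set.Ico 0 p := by
  rw [← Int.emod_def]
  exact ⟨Int.emod_nonneg x hp.ne', Int.emod_lt_of_pos x hp⟩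

theorem forall_fin_five {P : Fin 5 → Prop} : (∀ i, P i) ↔ P 0 ∧ P 1 ∧ P 2 ∧ P 3 ∧ P 4 :=
  ⟨fun h => ⟨h 0, h 1, h 2, h 3, h 4⟩, fun ⟨h₀, h₁, h₂, h₃, h₄⟩ i => by fin_cases i <;> assumption⟩

theorem mem_starReps {s : Fin 5 → ℤ} :
    s ∈ starReps m p E ↔ 0 ≤ s 0 ∧ s 0 < p ∧ IsStar m E (s 0) (s 1) (s 2) (s 3) (s 4) := by
  simp only [starReps, Finset.mem_filter, Finset.mem_Icc, Pi.le_def, forall_fin_five,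
    Pi.zero_apply, and_iff_right_iff_imp]
  rintro ⟨_, _, hs⟩
  obtain ⟨_, _, _, _, _, -, -, -, -, -⟩ := hs
  omega

theorem rotateRep_mem_starReps {s : Fin 5 → ℤ} (hp : 0 < p) (hE : IsLiftedTriangulation m E)
    (hP : TranslationInvariant p E) (hs : s ∈ starReps m p E) :
    rotateRep m p s ∈ starReps m p E := by
  obtain ⟨-, -, hstar⟩ := mem_starReps.1 hs
  obtain ⟨h, h'⟩ := sub_mul_ediv_mem_Ico hp (s 1)
  exact mem_starReps.2 ⟨h, h', (hstar.rotate hE).translate hP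
    (q := -(p * (s 1 / p))) ((dvd_neg).2 (dvd_mul_right _ _))⟩

theorem injOn_rotateRep : Set.InjOn (rotateRep m p) (starReps m p E) := by
  intro s hs s' hs' heq
  obtain ⟨h, h', -⟩ := mem_starReps.1 (Finset.mem_coe.1 hs)
  obtain ⟨k, k', -⟩ := mem_starReps.1 (Finset.mem_coe.1 hs')
  have h₀ : s 1 - p * (s 1 / p) = s' 1 - p * (s' 1 / p) := congrFun heq 0
  have h₁ : s 2 - p * (s 1 / p) = s' 2 - p * (s' 1 / p) := congrFun heq 1
  have h₂ : s 3 - p * (s 1 / p) = s' 3 - p * (s' 1 / p) := congrFun heq 2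
  have h₃ : s 4 - p * (s 1 / p) = s' 4 - p * (s' 1 / p) := congrFun heq 3
  have h₄ : s 0 + m - p * (s 1 / p) = s' 0 + m - p * (s' 1 / p) := congrFun heq 4
  have hfst : s 0 = s' 0 := by
    refine eq_of_dvd_sub_of_lt ⟨s 1 / p - s' 1 / p, ?_⟩ h h' k k'
    rw [mul_sub]
    omega
  rw [funext_iff, forall_fin_five]
  omega

theorem sum_comp_rotateRep (hp : 0 < p) (hE : IsLiftedTriangulation m E)
    (hP : TranslationInvariant p E) (f : (Fin 5 → ℤ) → ℤ) :
    ∑ s ∈ starReps m p E, f (rotateRep m p s) = ∑ s ∈ starReps m p E, f s := by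
  have hmaps : Set.MapsTo (rotateRep m p) (starReps m p E) (starReps m p E) :=
    fun s hs => rotateRep_mem_starReps hp hE hP hs
  exact Finset.sum_nbij (rotateRep m p) hmaps injOn_rotateRep
    (Finset.surjOn_of_injOn_of_card_le _ hmaps injOn_rotateRep le_rfl) fun _ _ => rfl

theorem five_mul_sum_starReps (hp : 0 < p) (hE : IsLiftedTriangulation m E)
    (hP : TranslationInvariant p E) :
    5 * ∑ s ∈ starReps m p E, (s 3 - s 2) = m * (starReps m p E).card := by
  have h₀ := sum_comp_rotateRep hp hE hP fun s => s 1 - s 0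
  have h₁ := sum_comp_rotateRep hp hE hP fun s => s 2 - s 1
  have h₂ := sum_comp_rotateRep hp hE hP fun s => s 3 - s 2
  have h₃ := sum_comp_rotateRep hp hE hP fun s => s 4 - s 3
  simp only [rotateRep, Matrix.cons_val_zero, Matrix.cons_val_one, Matrix.cons_val,
    sub_sub_sub_cancel_right, Finset.sum_sub_distrib, Finset.sum_add_distrib] at h₀ h₁ h₂ h₃
  have htotal : ∑ s ∈ starReps m p E, ((s 1 - s 0) + (s 2 - s 1) + (s 3 - s 2) + (s 4 - s 3) +
      (s 0 + m - s 4)) = m * (starReps m p E).card := by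
    rw [Finset.sum_congr rfl fun s _ => (by ring : _ = m), Finset.sum_const, nsmul_eq_mul, mul_comm]
  simp only [Finset.sum_add_distrib, Finset.sum_sub_distrib] at htotal ⊢
  linarith

theorem sum_starReps (hp : 0 ≤ p) (hm : 4 ≤ m) (hE : IsLiftedTriangulation m E) :
    ∑ s ∈ starReps m p E, (s 3 - s 2) = p * (m - 4) := by
  have hcard : ((starReps m p E).sigma fun s => Finset.Ioc (s 2) (s 3)).card =
      ((Finset.Ico 0 p).sigma fun v => Finset.Ioc (v + 2) (v + m - 2)).card := by
    refine Finset.card_bij (fun x _ => ⟨x.1 0, x.2⟩) ?_ ?_ ?_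
    · rintro ⟨s, t⟩ h
      simp only [Finset.mem_sigma, mem_starReps, Finset.mem_Ioc, Finset.mem_Ico] at h ⊢
      obtain ⟨⟨_, _, ⟨_, _, _, _, _, -, -, -, -, -⟩⟩, _, _⟩ := h
      omega
    · rintro ⟨s, t⟩ h ⟨s', t'⟩ h' heq
      simp only [Finset.mem_sigma, mem_starReps, Finset.mem_Ioc] at h h'
      simp only [Sigma.mk.injEq, heq_eq_eq] at heq ⊢
      obtain ⟨hfst, rfl⟩ := heq
      have hs' := h'.1.2.2
      rw [← hfst] at hs'
      have := h.1.2.2.eq_of_mem_Ioc hE hs' h.2.1 h.2.2 h'.2.1 h'.2.2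
      rw [funext_iff, forall_fin_five]
      omega
    · rintro ⟨v, t⟩ h
      simp only [Finset.mem_sigma, Finset.mem_Ioc, Finset.mem_Ico] at h
      obtain ⟨a, u, w, d, hs, hut, htw⟩ := hE.exists_isStar_of_mem_Ioc h.2.1 h.2.2
      refine ⟨⟨![v, a, u, w, d], t⟩, ?_, rfl⟩
      simp only [Finset.mem_sigma, mem_starReps, Finset.mem_Ioc]
      exact ⟨⟨h.1.1, h.1.2, hs⟩, hut, htw⟩
  rw [Finset.card_sigma, Finset.card_sigma, ← Nat.cast_inj (R := ℤ), Nat.cast_sum, Nat.cast_sum]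
    at hcard
  have hgap : ∀ s ∈ starReps m p E, ((Finset.Ioc (s 2) (s 3)).card : ℤ) = s 3 - s 2 :=
    fun s hs => Int.card_Ioc_of_le _ _ (mem_starReps.1 hs).2.2.lt₂₃.le
  have hangle : ∀ v ∈ Finset.Ico 0 p,
      ((Finset.Ioc (v + 2) (v + m - 2)).card : ℤ) = m - 4 := fun v _ => by
    rw [Int.card_Ioc_of_le _ _ (by omega)]; ring
  rwa [Finset.sum_congr rfl hgap, Finset.sum_congr rfl hangle, Finset.sum_const, nsmul_eq_mul,
    Int.card_Ico_of_le _ _ hp, sub_zero] at hcard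

theorem mem_edgeReps (hE : IsLiftedTriangulation m E) {x : ℤ × ℤ} :
    x ∈ edgeReps m p E L ↔ 0 ≤ x.1 ∧ x.1 < p ∧ E x.1 x.2 ∧ x.2 - x.1 ∈ L := by
  simp only [edgeReps, Finset.mem_filter, Finset.mem_product, Finset.mem_Ico]
  constructor
  · rintro ⟨⟨⟨h, h'⟩, -⟩, hx⟩
    exact ⟨h, h', hx⟩
  · rintro ⟨h, h', hx, hL⟩
    have := hE.lt hx
    have := hE.lt_add hx
    exact ⟨⟨⟨h, h'⟩, by omega, by omega⟩, hx, hL⟩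

theorem card_starReps_eq_card_edgeReps (hE : IsLiftedTriangulation m E) :
    (starReps m p E).card = (edgeReps m p E (Set.Ioc 2 (m - 2))).card := by
  refine Finset.card_bij (fun s _ => (s 0, s 3)) ?_ ?_ ?_
  · intro s hs
    obtain ⟨h, h', hstar⟩ := mem_starReps.1 hs
    refine (mem_edgeReps hE).2 ⟨h, h', hstar.edge₀₃, ?_⟩
    obtain ⟨_, _, _, _, _, -, -, -, -, -⟩ := hstar
    exact ⟨by omega, by omega⟩
  · intro s hs s' hs' heq
    obtain ⟨-, -, hstar⟩ := mem_starReps.1 hs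
    obtain ⟨-, -, hstar'⟩ := mem_starReps.1 hs'
    obtain ⟨hfst, hfourth⟩ := Prod.mk.inj heq
    rw [← hfst] at hstar'
    have := hstar.eq_of_mem_Ioc hE hstar' hstar.lt₂₃ le_rfl (hfourth ▸ hstar'.lt₂₃) hfourth.le
    rw [funext_iff, forall_fin_five]
    omega
  · rintro ⟨v, t⟩ hx
    obtain ⟨h, h', hvt, hlt, hle⟩ := (mem_edgeReps hE).1 hx
    obtain ⟨a, b, c, hs⟩ := hE.exists_isStar_left hvt (by omega) (by omega)
    exact ⟨![v, a, b, t, c], mem_starReps.2 ⟨h, h', hs⟩, rfl⟩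

theorem card_edgeReps_union (hE : IsLiftedTriangulation m E) (hL : Disjoint L L') :
    (edgeReps m p E (L ∪ L')).card = (edgeReps m p E L).card + (edgeReps m p E L').card := by
  rw [← Finset.card_union_of_disjoint]
  · congr 1
    ext x
    simp only [Finset.mem_union, mem_edgeReps hE, Set.mem_union, and_or_left]
  · rw [Finset.disjoint_left]
    intro x hx hx'
    exact Set.disjoint_left.1 hL ((mem_edgeReps hE).1 hx).2.2.2 ((mem_edgeReps hE).1 hx').2.2.2

theorem card_edgeReps_singleton_of_irrelevant {l : ℤ} (hE : IsLiftedTriangulation m E)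
    (hl : 0 < l) (hlm : l < m) (hirr : l ≤ 2 ∨ m - 2 ≤ l) :
    (edgeReps m p E {l}).card = p.toNat := by
  rw [← sub_zero p, ← Int.card_Ico, sub_zero]
  refine (Finset.card_bij (fun v _ => (v, v + l)) ?_ ?_ ?_).symm
  · intro v hv
    rw [Finset.mem_Ico] at hv
    exact (mem_edgeReps hE).2 ⟨hv.1, hv.2,
      hE.edge_of_irrelevant (by omega) (by omega) (by omega), add_sub_cancel_left v l⟩
  · exact fun v _ v' _ heq => (Prod.mk.inj heq).1
  · rintro ⟨v, t⟩ hx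
    obtain ⟨h, h', -, hlen⟩ := (mem_edgeReps hE).1 hx
    exact ⟨v, Finset.mem_Ico.2 ⟨h, h'⟩, by rw [← Set.mem_singleton_iff.1 hlen, add_sub_cancel]⟩

/-- Reversing an edge replaces its length by the complementary one. -/
theorem card_edgeReps_le (hp : 0 < p) (hE : IsLiftedTriangulation m E)
    (hP : TranslationInvariant p E) (hL : ∀ l ∈ L, m - l ∈ L') :
    (edgeReps m p E L).card ≤ (edgeReps m p E L').card := by
  refine Finset.card_le_card_of_injOn
    (fun x => (x.2 - p * (x.2 / p), x.1 + m - p * (x.2 / p))) ?_ ?_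
  · rintro ⟨v, t⟩ hx
    obtain ⟨-, -, hvt, hlen⟩ := (mem_edgeReps hE).1 hx
    obtain ⟨h, h'⟩ := sub_mul_ediv_mem_Ico hp t
    refine (mem_edgeReps hE).2 ⟨h, h', hP.sub (dvd_mul_right _ _) ((hE.turn _ _).2 hvt), ?_⟩
    convert hL _ hlen using 1
    ring
  · rintro ⟨v, t⟩ hx ⟨v', t'⟩ hx' heq
    obtain ⟨h, h', -⟩ := (mem_edgeReps hE).1 hx
    obtain ⟨k, k', -⟩ := (mem_edgeReps hE).1 hx'
    have ht : t - p * (t / p) = t' - p * (t' / p) := (Prod.mk.inj heq).1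
    have hv : v + m - p * (t / p) = v' + m - p * (t' / p) := (Prod.mk.inj heq).2
    have hvv' : v = v' := by
      refine eq_of_dvd_sub_of_lt ⟨t / p - t' / p, ?_⟩ h h' k k'
      rw [mul_sub]
      omega
    rw [Prod.mk.injEq]
    omega

theorem card_edgeReps_eq (hp : 0 < p) (hE : IsLiftedTriangulation m E)
    (hP : TranslationInvariant p E) (hL : ∀ l, l ∈ L ↔ m - l ∈ L') :
    (edgeReps m p E L).card = (edgeReps m p E L').card :=
  (card_edgeReps_le hp hE hP fun l => (hL l).1).antisymm
    (card_edgeReps_le hp hE hP fun l hl => (hL _).2 (by rwa [sub_sub_cancel]))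

/-- Two long edges and the translate by `p` of the first one form a 3-crossing. -/
theorem card_edgeReps_singleton_le_one {l : ℤ} (hE : IsLiftedTriangulation m E)
    (hP : TranslationInvariant p E) (hpl : p < l) (hlm : p + l < m) :
    (edgeReps m p E {l}).card ≤ 1 := by
  have not_lt : ∀ x ∈ edgeReps m p E {l}, ∀ x' ∈ edgeReps m p E {l}, ¬ x.1 < x'.1 := by
    intro x hx x' hx' hlt
    obtain ⟨_, _, hedge, hlen⟩ := (mem_edgeReps hE).1 hx
    obtain ⟨_, _, hedge', hlen'⟩ := (mem_edgeReps hE).1 hx'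
    rw [Set.mem_singleton_iff] at hlen hlen'
    exact hE.false_of_threeCrossing hedge hedge' (hP _ _ p dvd_rfl hedge) (by omega)
  refine Finset.card_le_one.2 fun x hx x' hx' => ?_
  have hlen : x.2 - x.1 = l := ((mem_edgeReps hE).1 hx).2.2.2
  have hlen' : x'.2 - x'.1 = l := ((mem_edgeReps hE).1 hx').2.2.2
  have := not_lt x hx x' hx'
  have := not_lt x' hx' x hx
  ext <;> omega

theorem card_starReps (hn : 0 < n) (hE : IsLiftedTriangulation (4 * n) E)
    (hP : TranslationInvariant n E) : ((starReps (4 * n) n E).card : ℤ) = 5 * (n - 1) := by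
  have h := five_mul_sum_starReps hn hE hP
  rw [sum_starReps hn.le (by omega) hE] at h
  refine mul_left_cancel₀ (by omega : 4 * n ≠ 0) ?_
  linear_combination -h

theorem card_edgeReps (hn : 0 < n) (hE : IsLiftedTriangulation (4 * n) E)
    (hP : TranslationInvariant n E) :
    ((edgeReps (4 * n) n E (Set.Ioc 2 (2 * n))).card : ℤ) = 2 * (n - 1) := by
  obtain rfl | hn' : n = 1 ∨ 2 ≤ n := by omega
  · simp [edgeReps]
  have hstars := card_starReps hn hE hP
  have hhalf : Set.Ioc 2 (2 * n) = Set.Ioo 2 (2 * n) ∪ {2 * n} :=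
    (Set.Ioo_union_right (by omega)).symm
  have hfull : Set.Ioc 2 (4 * n - 2) =
      Set.Ioo 2 (2 * n) ∪ {2 * n} ∪ (Set.Ioo (2 * n) (4 * n - 2) ∪ {4 * n - 2}) := by
    ext l
    simp only [Set.mem_Ioc, Set.mem_union, Set.mem_Ioo, Set.mem_singleton_iff]
    omega
  rw [card_starReps_eq_card_edgeReps hE, hfull, card_edgeReps_union hE, card_edgeReps_union hE,
    card_edgeReps_union hE, card_edgeReps_singleton_of_irrelevant hE (l := 4 * n - 2) (by omega)
      (by omega) (by omega)] at hstars
  rotate_left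
  · simp
  · simp
  · rw [Set.disjoint_left]
    intro l
    simp only [Set.mem_union, Set.mem_Ioo, Set.mem_singleton_iff]
    omega
  have hcompl := card_edgeReps_eq (L := Set.Ioo 2 (2 * n)) (L' := Set.Ioo (2 * n) (4 * n - 2)) hn hE
    hP fun l => by simp only [Set.mem_Ioo]; omega
  have hdiam := card_edgeReps_singleton_le_one (l := 2 * n) hE hP (by omega) (by omega)
  rw [hhalf, card_edgeReps_union hE (by simp)]
  omega

theorem exists_inOrbit_mem_edgeReps (hn : 0 < n) (hE : IsLiftedTriangulation (4 * n) E)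
    (hP : TranslationInvariant n E) {v t : ℤ} (hvt : E v t) (hlt : v + 2 < t)
    (hlt' : t < v + 4 * n - 2) :
    ∃ x ∈ edgeReps (4 * n) n E (Set.Ioc 2 (2 * n)), InOrbit (4 * n) n v t x.1 x.2 := by
  obtain hle | hgt := le_or_gt (t - v) (2 * n)
  · obtain ⟨h, h'⟩ := sub_mul_ediv_mem_Ico hn v
    have hdvd : n ∣ n * (v / n) := dvd_mul_right _ _
    refine ⟨(v - n * (v / n), t - n * (v / n)),
      (mem_edgeReps hE).2 ⟨h, h', hP.sub hdvd hvt, by omega, by omega⟩,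
      InOrbit.translationInvariant.sub hdvd (InOrbit.refl _ _ _ _)⟩
  · obtain ⟨h, h'⟩ := sub_mul_ediv_mem_Ico hn t
    have hdvd : n ∣ n * (t / n) := dvd_mul_right _ _
    refine ⟨(t - n * (t / n), v + 4 * n - n * (t / n)),
      (mem_edgeReps hE).2 ⟨h, h', hP.sub hdvd ((hE.turn _ _).2 hvt), by omega, by omega⟩,
      InOrbit.translationInvariant.sub hdvd
        ((InOrbit.turnInvariant (dvd_mul_left _ _) _ _).2 (InOrbit.refl _ _ _ _))⟩

theorem eq_of_inOrbit_of_mem_edgeReps (hE : IsLiftedTriangulation (4 * n) E) {x y : ℤ × ℤ}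
    (hx : x ∈ edgeReps (4 * n) n E (Set.Ioc 2 (2 * n)))
    (hy : y ∈ edgeReps (4 * n) n E (Set.Ioc 2 (2 * n)))
    (h : InOrbit (4 * n) n x.1 x.2 y.1 y.2) : x = y := by
  obtain ⟨hx₀, hxn, -, -, hxlen⟩ := (mem_edgeReps hE).1 hx
  obtain ⟨hy₀, hyn, -, -, hylen⟩ := (mem_edgeReps hE).1 hy
  have hfst : x.1 = y.1 := by
    obtain ⟨q, hq, ⟨h₁, _⟩ | ⟨h₁, h₂⟩⟩ := h
    · exact eq_of_dvd_sub_of_lt ((dvd_neg).1 (by rwa [neg_sub, h₁, add_sub_cancel_left])) hx₀ hxn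
        hy₀ hyn
    -- If the orbit is turned, both lengths are the maximal one, `2 * n`.
    · have hlen : x.2 - x.1 = 2 * n := by omega
      refine eq_of_dvd_sub_of_lt (p := n) ?_ hx₀ hxn hy₀ hyn
      rw [(by omega : x.1 - y.1 = -(q + 2 * n)), dvd_neg]
      exact dvd_add hq (dvd_mul_left _ _)
  obtain ⟨q, -, h⟩ := h
  ext <;> omega

end Counting

/-! ### Polygon edges and their lifts -/

/-- The edge of the `M`-gon between the classes of `i` and `j`. -/
def polyEdge (M : ℕ) (i j : ℤ) : Sym2 (ZMod M) := s((i : ZMod M), (j : ZMod M))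

/-- The lifts to the integers of the members of a set of edges of the `M`-gon. -/
def lift (M : ℕ) (T : Set (Sym2 (ZMod M))) (i j : ℤ) : Prop :=
  i < j ∧ j < i + M ∧ polyEdge M i j ∈ T

/-- The set of edges of the `M`-gon with lifts in `E`. -/
def polyEdges (M : ℕ) (E : ℤ → ℤ → Prop) : Set (Sym2 (ZMod M)) :=
  {e | ∃ i j, E i j ∧ polyEdge M i j = e}

section Lift

variable {M : ℕ} {T : Set (Sym2 (ZMod M))} {e f : Sym2 (ZMod M)} {E : ℤ → ℤ → Prop}
  {i j v t : ℤ}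

theorem polyEdge_eq_polyEdge_iff_dvd : polyEdge M v t = polyEdge M i j ↔
    ((M : ℤ) ∣ i - v ∧ (M : ℤ) ∣ j - t) ∨ ((M : ℤ) ∣ j - v ∧ (M : ℤ) ∣ i - t) := by
  simp only [polyEdge, Sym2.eq_iff, ZMod.intCast_eq_intCast_iff_dvd_sub]

theorem polyEdge_turn (M : ℕ) (i j : ℤ) : polyEdge M j (i + M) = polyEdge M i j :=
  (polyEdge_eq_polyEdge_iff_dvd.2 (.inr (by simp))).symm

theorem polyEdge_add_add {q : ℤ} (hq : (M : ℤ) ∣ q) (i j : ℤ) :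
    polyEdge M (i + q) (j + q) = polyEdge M i j :=
  (polyEdge_eq_polyEdge_iff_dvd.2 (.inl (by simpa using hq))).symm

theorem polyEdge_eq_polyEdge_iff (hvt : v < t) (htv : t < v + M) (hij : i < j)
    (hji : j < i + M) : polyEdge M v t = polyEdge M i j ↔ InOrbit M M v t i j := by
  constructor
  · intro h
    rcases polyEdge_eq_polyEdge_iff_dvd.1 h with ⟨h, h'⟩ | ⟨h, h'⟩
    · have := Int.eq_zero_of_abs_lt_dvd (dvd_sub h' h) (abs_lt.2 ⟨by omega, by omega⟩)
      exact ⟨i - v, h, by omega⟩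
    · have := Int.eq_zero_of_abs_lt_dvd (dvd_sub (dvd_sub h h') (dvd_refl (M : ℤ)))
        (abs_lt.2 ⟨by omega, by omega⟩)
      exact ⟨i - t, h', by omega⟩
  · rintro ⟨q, hq, ⟨rfl, rfl⟩ | ⟨rfl, rfl⟩⟩
    · exact (polyEdge_add_add hq v t).symm
    · exact ((polyEdge_add_add hq t (v + M)).trans (polyEdge_turn M v t)).symm

theorem not_isDiag_polyEdge (hij : i < j) (hji : j < i + M) : ¬ (polyEdge M i j).IsDiag := by
  rw [polyEdge, Sym2.mk_isDiag_iff, ← sub_eq_zero, ← Int.cast_sub,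
    ZMod.intCast_zmod_eq_zero_iff_dvd]
  intro h
  have := Int.eq_zero_of_abs_lt_dvd h (abs_lt.2 ⟨by omega, by omega⟩)
  omega

theorem polyEdge_val [NeZero M] (x y : ZMod M) : polyEdge M x.val y.val = s(x, y) := by
  simp [polyEdge]

theorem exists_polyEdge_eq [NeZero M] (he : ¬ e.IsDiag) :
    ∃ i j : ℤ, i < j ∧ j < i + M ∧ polyEdge M i j = e := by
  induction e with
  | _ x y =>
    have hxy : x.val ≠ y.val := fun h => he (Sym2.mk_isDiag_iff.2 (ZMod.val_injective M h))
    have hx := x.val_lt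
    have hy := y.val_lt
    rcases lt_or_gt_of_ne hxy with h | h
    · exact ⟨x.val, y.val, by omega, by omega, polyEdge_val x y⟩
    · exact ⟨y.val, x.val, by omega, by omega, (polyEdge_val y x).trans Sym2.eq_swap⟩

theorem polyCrosses_comm : PolyCrosses e f ↔ PolyCrosses f e := by
  constructor <;> exact fun ⟨x, y, z, w, he, hf, h⟩ => ⟨z, w, x, y, hf, he, h.symm⟩

theorem polyCrosses_polyEdge_of_lt {a b c d : ℤ} (ha : 0 ≤ a) (hab : a < b) (hbc : b < c)
    (hcd : c < d) (hd : d < M) : PolyCrosses (polyEdge M a c) (polyEdge M b d) := by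
  have val_cast : ∀ {x : ℤ}, 0 ≤ x → x < M → (((x : ZMod M).val : ℕ) : ℤ) = x := fun h h' => by
    have : NeZero M := ⟨by omega⟩
    rw [ZMod.val_intCast, Int.emod_eq_of_lt h h']
  refine ⟨a, c, b, d, rfl, rfl, ?_⟩
  have := val_cast ha (by omega)
  have := val_cast (x := b) (by omega) (by omega)
  have := val_cast (x := c) (by omega) (by omega)
  have := val_cast (x := d) (by omega) (by omega)
  unfold crossIndex
  omega

theorem polyCrosses_polyEdge {a b c d : ℤ} (hab : a < b) (hbc : b < c) (hcd : c < d)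
    (hda : d < a + M) : PolyCrosses (polyEdge M a c) (polyEdge M b d) := by
  wlog ha : 0 ≤ a ∧ a < M generalizing a b c d
  · have hq : (M : ℤ) ∣ -(M * (a / M)) := (dvd_neg).2 (dvd_mul_right _ _)
    rw [← polyEdge_add_add hq a, ← polyEdge_add_add hq b]
    exact this (by omega) (by omega) (by omega) (by omega)
      (sub_mul_ediv_mem_Ico (by omega : (0 : ℤ) < M) a)
  have turn_back : ∀ x y : ℤ, polyEdge M (y - M) x = polyEdge M x y := fun x y => by
    rw [← polyEdge_turn, sub_add_cancel]
  by_cases hd : d < M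
  · exact polyCrosses_polyEdge_of_lt ha.1 hab hbc hcd hd
  rw [← turn_back b d]
  by_cases hc : c < M
  · exact polyCrosses_comm.1
      (polyCrosses_polyEdge_of_lt (by omega) (by omega) hab hbc hc)
  rw [← turn_back a c]
  by_cases hb : b < M
  · exact polyCrosses_polyEdge_of_lt (by omega) (by omega) (by omega) hab hb
  rw [← turn_back (d - M) b]
  exact polyCrosses_comm.1
    (polyCrosses_polyEdge_of_lt (by omega) (by omega) (by omega) (by omega) ha.2)

theorem polyCrosses_iff [NeZero M] : PolyCrosses e f ↔ ∃ a b c d : ℤ,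
    (a < b ∧ b < c ∧ c < d ∧ d < a + M) ∧ polyEdge M a c = e ∧ polyEdge M b d = f := by
  constructor
  · rintro ⟨x, y, z, w, rfl, rfl, h⟩
    have polyEdge_min_max : ∀ x y : ZMod M,
        polyEdge M (min x.val y.val : ℕ) (max x.val y.val : ℕ) = s(x, y) := fun x y => by
      rcases le_total x.val y.val with hxy | hxy
      · rw [min_eq_left hxy, max_eq_right hxy, polyEdge_val]
      · rw [min_eq_right hxy, max_eq_left hxy, polyEdge_val, Sym2.eq_swap]
    have := x.val_lt
    have := y.val_lt
    have := z.val_lt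
    have := w.val_lt
    rw [← polyEdge_min_max x y, ← polyEdge_min_max z w]
    rcases h with h | h
    · exact ⟨_, _, _, _, by omega, rfl, rfl⟩
    · exact ⟨_, _, _, _, by omega, rfl, polyEdge_turn _ _ _⟩
  · rintro ⟨a, b, c, d, h, rfl, rfl⟩
    exact polyCrosses_polyEdge h.1 h.2.1 h.2.2.1 h.2.2.2

theorem polyCrosses_polyEdge_iff [NeZero M] (hij : i < j) (hji : j < i + M) :
    PolyCrosses (polyEdge M i j) f ↔
      ∃ a b, (i < a ∧ a < j ∧ j < b ∧ b < i + M) ∧ polyEdge M a b = f := by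
  constructor
  · intro h
    obtain ⟨a, b, c, d, hord, he, rfl⟩ := polyCrosses_iff.1 h
    obtain ⟨q, hq, h | h⟩ :=
      (polyEdge_eq_polyEdge_iff (by omega) (by omega) hij hji).1 he
    · exact ⟨b + q, d + q, by omega, polyEdge_add_add hq b d⟩
    · exact ⟨d + q, b + M + q, by omega,
        (polyEdge_add_add hq d (b + M)).trans (polyEdge_turn M b d)⟩
  · rintro ⟨a, b, h, rfl⟩
    exact polyCrosses_polyEdge h.1 h.2.1 h.2.2.1 h.2.2.2

theorem PolyCrosses.ne (h : PolyCrosses e f) : e ≠ f := by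
  obtain ⟨x, y, z, w, rfl, rfl, h⟩ := h
  intro heq
  unfold crossIndex at h
  rcases Sym2.eq_iff.1 heq with ⟨rfl, rfl⟩ | ⟨rfl, rfl⟩ <;> omega

theorem polyCrossingFree_three_iff : PolyCrossingFree 3 T ↔
    ∀ e ∈ T, ∀ x ∈ T, ∀ y ∈ T, PolyCrosses e x → PolyCrosses e y → ¬ PolyCrosses x y := by
  classical
  constructor
  · intro h e he x hx y hy hex hey hxy
    refine h ⟨{e, x, y}, ?_, Finset.card_eq_three.2 ⟨e, x, y, hex.ne, hey.ne, hxy.ne, rfl⟩, ?_⟩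
    · simp [Set.insert_subset_iff, he, hx, hy]
    · simp only [Finset.mem_insert, Finset.mem_singleton]
      rintro _ (rfl | rfl | rfl) _ (rfl | rfl | rfl) hne <;>
        first | exact absurd rfl hne | assumption | exact polyCrosses_comm.1 ‹_›
  · rintro h ⟨S, hST, hcard, hcross⟩
    obtain ⟨e, x, y, hex, hey, hxy, rfl⟩ := Finset.card_eq_three.1 hcard
    exact h e (hST (by simp)) x (hST (by simp)) y (hST (by simp))
      (hcross e (by simp) x (by simp) hex) (hcross e (by simp) y (by simp) hey)
      (hcross x (by simp) y (by simp) hxy)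

theorem compatible_lift_iff [NeZero M] (hij : i < j) (hji : j < i + M) :
    Compatible M (lift M T) i j ↔ ∀ x ∈ T, ∀ y ∈ T, PolyCrosses (polyEdge M i j) x →
      PolyCrosses (polyEdge M i j) y → ¬ PolyCrosses x y := by
  constructor
  · intro h x hx y hy hex hey hxy
    obtain ⟨a, b, hab, rfl⟩ := (polyCrosses_polyEdge_iff hij hji).1 hex
    obtain ⟨c, d, hcd, rfl⟩ := (polyCrosses_polyEdge_iff hij hji).1 hey
    obtain ⟨c', d', hcd', heq⟩ := (polyCrosses_polyEdge_iff (by omega) (by omega)).1 hxy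
    obtain ⟨q, hq, hq'⟩ :=
      (polyEdge_eq_polyEdge_iff (by omega) (by omega) (by omega) (by omega)).1 heq
    have hord : a < c ∧ b < d ∨ c < a ∧ d < b := by
      obtain rfl | hne := eq_or_ne q 0
      · omega
      · have := Int.le_of_dvd (abs_pos.2 hne) ((dvd_abs _ _).2 hq)
        rw [le_abs] at this
        omega
    rcases hord with hord | hord
    · exact h a c b d (by omega) (by omega) (by omega) (by omega) (by omega) (by omega)
        ⟨by omega, by omega, hx⟩ ⟨by omega, by omega, hy⟩
    · exact h c a d b (by omega) (by omega) (by omega) (by omega) (by omega) (by omega)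
        ⟨by omega, by omega, hy⟩ ⟨by omega, by omega, hx⟩
  · intro h a c b d h₁ h₂ h₃ h₄ h₅ h₆ hab hcd
    exact h _ hab.2.2 _ hcd.2.2
      (polyCrosses_polyEdge h₁ (h₂.trans h₃) h₄ (h₅.trans h₆))
      (polyCrosses_polyEdge (h₁.trans h₂) h₃ (h₄.trans h₅) h₆)
      (polyCrosses_polyEdge h₂ (h₃.trans h₄) h₅ (by omega))

theorem PolyCrossingFree.compatible_lift [NeZero M] (hT : PolyCrossingFree 3 T)
    (hij : lift M T i j) : Compatible M (lift M T) i j :=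
  (compatible_lift_iff hij.1 hij.2.1).2 (polyCrossingFree_three_iff.1 hT _ hij.2.2)

theorem PolyCrossingFree.insert (hT : PolyCrossingFree 3 T)
    (he : ∀ x ∈ T, ∀ y ∈ T, PolyCrosses e x → PolyCrosses e y → ¬ PolyCrosses x y) :
    PolyCrossingFree 3 (insert e T) := by
  rw [polyCrossingFree_three_iff] at hT ⊢
  rintro f (rfl | hf) x (rfl | hx) y (rfl | hy) hfx hfy hxy
  · exact hxy.ne rfl
  · exact hfx.ne rfl
  · exact hfy.ne rfl
  · exact he x hx y hy hfx hfy hxy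
  · exact hxy.ne rfl
  · exact he f hf y hy (polyCrosses_comm.1 hfx) hxy hfy
  · exact he f hf x hx (polyCrosses_comm.1 hfy) (polyCrosses_comm.1 hxy) hfx
  · exact hT f hf x hx y hy hfx hfy hxy

theorem turnInvariant_lift (M : ℕ) (T : Set (Sym2 (ZMod M))) : TurnInvariant M (lift M T) := by
  intro i j
  simp only [lift, polyEdge_turn, ← and_assoc]
  exact and_congr_left' (by omega)

theorem IsPolyTriangulation.isLiftedTriangulation_lift [NeZero M] (hT : IsPolyTriangulation T) :
    IsLiftedTriangulation M (lift M T) where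
  lt hij := hij.1
  lt_add hij := hij.2.1
  turn := turnInvariant_lift M T
  compatible hij := hT.2.1.compatible_lift hij
  edge_of_compatible {i j} hij hji hcomp := by
    refine ⟨hij, hji, Set.insert_eq_self.1 (hT.2.2 _ ?_ ?_ (Set.subset_insert _ _))⟩
    · rintro e (rfl | he)
      exacts [not_isDiag_polyEdge hij hji, hT.1 e he]
    · exact hT.2.1.insert ((compatible_lift_iff hij hji).1 hcomp)

theorem lift_polyEdges (hE : IsLiftedTriangulation M E) : lift M (polyEdges M E) = E := by
  ext i j
  constructor
  · rintro ⟨hij, hji, v, t, hvt, heq⟩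
    exact ((polyEdge_eq_polyEdge_iff (hE.lt hvt) (hE.lt_add hvt) hij hji).1 heq).edge hE.turn
      hE.turn.translationInvariant hvt
  · exact fun hij => ⟨hE.lt hij, hE.lt_add hij, i, j, hij, rfl⟩

theorem polyEdges_lift [NeZero M] (hT : PolyValid T) : polyEdges M (lift M T) = T := by
  ext e
  constructor
  · rintro ⟨i, j, hij, rfl⟩
    exact hij.2.2
  · intro he
    obtain ⟨i, j, hij, hji, rfl⟩ := exists_polyEdge_eq (hT e he)
    exact ⟨i, j, ⟨hij, hji, he⟩, rfl⟩

theorem IsLiftedTriangulation.isPolyTriangulation_polyEdges [NeZero M]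
    (hE : IsLiftedTriangulation M E) : IsPolyTriangulation (polyEdges M E) := by
  refine ⟨?_, ?_, fun T' hvalid hfree hsub => (hsub.antisymm fun e he => ?_).symm⟩
  · rintro e ⟨i, j, hij, rfl⟩
    exact not_isDiag_polyEdge (hE.lt hij) (hE.lt_add hij)
  · rw [polyCrossingFree_three_iff]
    rintro e ⟨i, j, hij, rfl⟩
    have hcomp := hE.compatible hij
    rw [← lift_polyEdges hE] at hcomp
    exact (compatible_lift_iff (hE.lt hij) (hE.lt_add hij)).1 hcomp
  · obtain ⟨i, j, hij, hji, rfl⟩ := exists_polyEdge_eq (hvalid e he)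
    refine ⟨i, j, hE.edge_of_compatible hij hji ?_, rfl⟩
    refine (hfree.compatible_lift ⟨hij, hji, he⟩).mono fun a b hab => ?_
    exact ⟨hE.lt hab, hE.lt_add hab, hsub ⟨a, b, hab, rfl⟩⟩

end Lift

/-! ### Periodicity and flips of polygon triangulations -/

section Periodic

variable {n M : ℕ} {T : Set (Sym2 (ZMod M))} {E : ℤ → ℤ → Prop} {i j : ℤ}

theorem map_add_polyEdge (c : ℕ) (i j : ℤ) :
    Sym2.map (· + (c : ZMod M)) (polyEdge M i j) = polyEdge M (i + c) (j + c) := by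
  simp [polyEdge]

theorem translationInvariant_of_forall_iff {p : ℤ} (h : ∀ i j, E (i + p) (j + p) ↔ E i j) :
    TranslationInvariant p E := by
  rintro i j _ ⟨k, rfl⟩ hij
  have hper : Function.Periodic (fun x => E (i + x) (j + x)) p := fun x =>
    propext (by simpa only [add_assoc] using h (i + x) (j + x))
  simpa only [zero_add, add_zero, Int.cast_id, mul_comm k p, hij, eq_iff_iff, iff_true] using
    hper.int_mul k 0

theorem PolyPeriodic.translationInvariant_lift (hT : PolyPeriodic n T) :
    TranslationInvariant n (lift M T) := by
  refine translationInvariant_of_forall_iff fun i j => ?_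
  simp only [lift, hT (polyEdge M i j), map_add_polyEdge, ← and_assoc]
  exact and_congr_left' (by omega)

theorem TranslationInvariant.polyPeriodic_polyEdges (hE : TranslationInvariant n E) :
    PolyPeriodic n (polyEdges M E) := by
  intro e
  constructor
  · rintro ⟨i, j, hij, rfl⟩
    exact ⟨_, _, hE _ _ _ dvd_rfl hij, (map_add_polyEdge n i j).symm⟩
  · rintro ⟨i, j, hij, he⟩
    refine ⟨i - n, j - n, hE.sub dvd_rfl hij, ?_⟩
    apply Sym2.map.injective (add_left_injective (n : ZMod M))
    rw [map_add_polyEdge, sub_add_cancel, sub_add_cancel, he]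

end Periodic

section Flips

variable {n : ℕ} {T T' : Set (Sym2 (ZMod (4 * n)))} {e : Sym2 (ZMod (4 * n))} {v t i j : ℤ}

theorem mem_tilde_polyEdge : e ∈ tilde n (polyEdge (4 * n) v t) ↔
    ∃ q : ℤ, (n : ℤ) ∣ q ∧ polyEdge (4 * n) (v + q) (t + q) = e := by
  simp only [tilde, map_add_polyEdge, Set.mem_insert_iff, Set.mem_singleton_iff]
  constructor
  · rintro (rfl | rfl | rfl | rfl)
    · exact ⟨0, dvd_zero _, by simp only [add_zero]⟩
    · exact ⟨n, dvd_rfl, rfl⟩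
    · exact ⟨(2 * n : ℕ), by simp, rfl⟩
    · exact ⟨(3 * n : ℕ), by simp, rfl⟩
  · rintro ⟨_, ⟨r, rfl⟩, rfl⟩
    have hmod : polyEdge (4 * n) (v + n * r) (t + n * r) =
        polyEdge (4 * n) (v + n * (r % 4)) (t + n * (r % 4)) := by
      rw [← polyEdge_add_add (dvd_mul_right ((4 * n : ℕ) : ℤ) (r / 4)) (v + n * (r % 4)), add_assoc,
        add_assoc]
      have : (n : ℤ) * r = n * (r % 4) + (4 * n : ℕ) * (r / 4) := by
        conv_lhs => rw [← Int.emod_add_mul_ediv r 4]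
        push_cast
        ring
      rw [this]
    rw [hmod]
    obtain h | h | h | h : r % 4 = 0 ∨ r % 4 = 1 ∨ r % 4 = 2 ∨ r % 4 = 3 := by omega
    all_goals simp [h, mul_comm (n : ℤ)]

theorem self_mem_tilde (e : Sym2 (ZMod (4 * n))) : e ∈ tilde n e := Set.mem_insert _ _

theorem polyEdge_mem_tilde_iff (hvt : v < t) (htv : t < v + 4 * n) (hij : i < j)
    (hji : j < i + 4 * n) :
    polyEdge (4 * n) i j ∈ tilde n (polyEdge (4 * n) v t) ↔ InOrbit (4 * n) n v t i j := by
  have hdvd : (n : ℤ) ∣ (4 * n : ℕ) := by simp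
  rw [mem_tilde_polyEdge]
  constructor
  · rintro ⟨q, hq, heq⟩
    obtain ⟨s, hs, h⟩ :=
      (polyEdge_eq_polyEdge_iff (by omega) (by push_cast; omega) hij (by push_cast; omega)).1 heq
    exact ⟨q + s, dvd_add hq (hdvd.trans hs), by omega⟩
  · rintro ⟨q, hq, ⟨rfl, rfl⟩ | ⟨rfl, rfl⟩⟩
    · exact ⟨q, hq, rfl⟩
    · refine ⟨q, hq, ?_⟩
      rw [← polyEdge_turn]
      congr 1
      push_cast
      ring

theorem tilde_eq_of_mem_tilde (he : e ∈ tilde n (polyEdge (4 * n) v t)) :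
    tilde n e = tilde n (polyEdge (4 * n) v t) := by
  obtain ⟨s, hs, rfl⟩ := mem_tilde_polyEdge.1 he
  ext f
  rw [mem_tilde_polyEdge, mem_tilde_polyEdge]
  constructor
  · rintro ⟨q, hq, rfl⟩
    exact ⟨s + q, dvd_add hs hq, by simp only [add_assoc]⟩
  · rintro ⟨q, hq, rfl⟩
    exact ⟨q - s, dvd_sub hq hs, by simp only [add_assoc, add_sub_cancel]⟩

theorem exists_polyEdge_eq_of_polyRelevant (he : PolyRelevant n e) :
    ∃ v t : ℤ, v + 2 < t ∧ t < v + 4 * n - 2 ∧ polyEdge (4 * n) v t = e := by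
  obtain ⟨a, b, hab, hb, rfl, hlt, hlt'⟩ := he
  exact ⟨a, b, by omega, by omega, by simp [polyEdge]⟩

theorem polyRelevant_polyEdge_of_nonneg (hv : 0 ≤ v) (ht : t < 4 * n) (hlt : v + 2 < t)
    (hlt' : t < v + 4 * n - 2) : PolyRelevant n (polyEdge (4 * n) v t) := by
  lift v to ℕ using hv
  lift t to ℕ using (by omega)
  exact ⟨v, t, by omega, by omega, by simp [polyEdge], by omega, by omega⟩

theorem polyRelevant_polyEdge (hlt : v + 2 < t) (hlt' : t < v + 4 * n - 2) :
    PolyRelevant n (polyEdge (4 * n) v t) := by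
  wlog hv : 0 ≤ v ∧ v < 4 * n generalizing v t
  · have hq : ((4 * n : ℕ) : ℤ) ∣ -(4 * n * (v / (4 * n))) := by
      push_cast
      exact (dvd_neg).2 (dvd_mul_right _ _)
    rw [← polyEdge_add_add hq]
    exact this (by omega) (by omega)
      (sub_mul_ediv_mem_Ico (by omega : (0 : ℤ) < 4 * n) v)
  obtain ht | ht := lt_or_ge t (4 * n)
  · exact polyRelevant_polyEdge_of_nonneg hv.1 ht hlt hlt'
  · rw [← sub_add_cancel t ((4 * n : ℕ) : ℤ), polyEdge_turn]
    exact polyRelevant_polyEdge_of_nonneg (by omega) hv.2 (by omega) (by omega)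

namespace IsPeriodicPolyTriangulation

theorem isLiftedTriangulation_lift (hT : IsPeriodicPolyTriangulation n T) (hn : 0 < n) :
    IsLiftedTriangulation (4 * n) (lift (4 * n) T) := by
  have : NeZero (4 * n) := ⟨by omega⟩
  exact_mod_cast hT.1.isLiftedTriangulation_lift

theorem translationInvariant_lift (hT : IsPeriodicPolyTriangulation n T) :
    TranslationInvariant n (lift (4 * n) T) :=
  hT.2.translationInvariant_lift

theorem isFlipOf_lift_iff (hT : IsPeriodicPolyTriangulation n T)
    (hT' : IsPeriodicPolyTriangulation n T') (hn : 0 < n) (hvt : lift (4 * n) T v t) :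
    IsFlipOf (4 * n) n (lift (4 * n) T) v t (lift (4 * n) T') ↔
      T \ T' = tilde n (polyEdge (4 * n) v t) := by
  have : NeZero (4 * n) := ⟨by omega⟩
  have hE := hT.isLiftedTriangulation_lift hn
  have hE' := hT'.isLiftedTriangulation_lift hn
  have hP := hT.translationInvariant_lift
  constructor
  · intro h
    ext e
    constructor
    · rintro ⟨he, he'⟩
      obtain ⟨i, j, hij, hji, rfl⟩ := exists_polyEdge_eq (hT.1.1 e he)
      rw [polyEdge_mem_tilde_iff (hE.lt hvt) (hE.lt_add hvt) hij (by exact_mod_cast hji)]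
      by_contra horbit
      exact he' (h.of_removeOrbit i j ⟨⟨hij, hji, he⟩, horbit⟩).2.2
    · intro he
      obtain ⟨q, hq, rfl⟩ := mem_tilde_polyEdge.1 he
      have hedge := hP v t q hq hvt
      refine ⟨hedge.2.2, fun he' => h.not_edge ?_⟩
      simpa only [add_sub_cancel_right] using
        h.translationInvariant.sub hq ⟨hedge.1, hedge.2.1, he'⟩
  · intro h
    refine ⟨hE', hT'.translationInvariant_lift, fun i j ⟨hij, horbit⟩ => ?_, fun hvt' => ?_⟩
    · refine ⟨hij.1, hij.2.1, by_contra fun he' => horbit ?_⟩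
      rw [← polyEdge_mem_tilde_iff (hE.lt hvt) (hE.lt_add hvt) (hE.lt hij) (hE.lt_add hij), ← h]
      exact ⟨hij.2.2, he'⟩
    · have hmem : polyEdge (4 * n) v t ∈ T \ T' := h ▸ self_mem_tilde _
      exact hmem.2 hvt'.2.2

theorem existsUnique_flip (hT : IsPeriodicPolyTriangulation n T) (hvt : lift (4 * n) T v t)
    (hlt : v + 2 < t) (hlt' : t < v + 4 * n - 2) :
    ∃! T', IsPeriodicPolyTriangulation n T' ∧ T \ T' = tilde n (polyEdge (4 * n) v t) := by
  have hn : 0 < n := by omega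
  have : NeZero (4 * n) := ⟨by omega⟩
  have hE := hT.isLiftedTriangulation_lift hn
  obtain ⟨E', hE', huniq⟩ := hE.hasUniqueFlip hT.translationInvariant_lift hvt hlt hlt'
  have hlifted : IsLiftedTriangulation (4 * n : ℕ) E' := by exact_mod_cast hE'.isLifted
  have hT' : IsPeriodicPolyTriangulation n (polyEdges (4 * n) E') :=
    ⟨hlifted.isPolyTriangulation_polyEdges, hE'.translationInvariant.polyPeriodic_polyEdges⟩
  refine ⟨polyEdges (4 * n) E', ⟨hT', ?_⟩, fun T'' ⟨hT'', hdiff⟩ => ?_⟩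
  · rwa [← isFlipOf_lift_iff hT hT' hn hvt, lift_polyEdges hlifted]
  · rw [← huniq _ ((isFlipOf_lift_iff hT hT'' hn hvt).2 hdiff), polyEdges_lift hT''.1.1]

theorem injOn_tilde_edgeReps (hT : IsPeriodicPolyTriangulation n T) (hn : 0 < n) :
    Set.InjOn (fun x : ℤ × ℤ => tilde n (polyEdge (4 * n) x.1 x.2))
      (edgeReps (4 * n) n (lift (4 * n) T) (Set.Ioc 2 (2 * n))) := by
  intro x hx y hy (h : tilde n _ = tilde n _)
  have hE := hT.isLiftedTriangulation_lift hn
  have hxE := ((mem_edgeReps hE).1 hx).2.2.1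
  have hyE := ((mem_edgeReps hE).1 hy).2.2.1
  refine eq_of_inOrbit_of_mem_edgeReps hE hx hy ?_
  rw [← polyEdge_mem_tilde_iff (hE.lt hxE) (hE.lt_add hxE) (hE.lt hyE) (hE.lt_add hyE), h]
  exact self_mem_tilde _

theorem exists_mem_edgeReps_tilde_eq (hT : IsPeriodicPolyTriangulation n T) (he : e ∈ T)
    (hrel : PolyRelevant n e) :
    ∃ x ∈ edgeReps (4 * n) n (lift (4 * n) T) (Set.Ioc 2 (2 * n)),
      tilde n (polyEdge (4 * n) x.1 x.2) = tilde n e := by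
  obtain ⟨v, t, hlt, hlt', rfl⟩ := exists_polyEdge_eq_of_polyRelevant hrel
  have hn : 0 < n := by omega
  have hE := hT.isLiftedTriangulation_lift hn
  have hvt : lift (4 * n) T v t := ⟨by omega, by omega, he⟩
  obtain ⟨x, hx, horbit⟩ := exists_inOrbit_mem_edgeReps (by exact_mod_cast hn) hE
    hT.translationInvariant_lift hvt hlt hlt'
  have hxE := ((mem_edgeReps hE).1 hx).2.2.1
  exact ⟨x, hx, tilde_eq_of_mem_tilde ((polyEdge_mem_tilde_iff (hE.lt hvt) (hE.lt_add hvt)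
    (hE.lt hxE) (hE.lt_add hxE)).2 horbit)⟩

theorem existsUnique_flip_of_mem_edgeReps (hT : IsPeriodicPolyTriangulation n T) (hn : 0 < n)
    {x : ℤ × ℤ} (hx : x ∈ edgeReps (4 * n) n (lift (4 * n) T) (Set.Ioc 2 (2 * n))) :
    ∃! T', IsPeriodicPolyTriangulation n T' ∧
      T \ T' = tilde n (polyEdge (4 * n) x.1 x.2) := by
  obtain ⟨-, -, hxE, hlt, hle⟩ := (mem_edgeReps (hT.isLiftedTriangulation_lift hn)).1 hx
  exact hT.existsUnique_flip hxE (by omega) (by omega)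

theorem card_edgeReps_lift (hT : IsPeriodicPolyTriangulation n T) (hn : 0 < n) :
    (edgeReps (4 * n) n (lift (4 * n) T) (Set.Ioc 2 (2 * n))).card = 2 * (n - 1) := by
  have := card_edgeReps (by exact_mod_cast hn) (hT.isLiftedTriangulation_lift hn)
    hT.translationInvariant_lift
  omega

end IsPeriodicPolyTriangulation

end Flips

/-- The flip graph of `n`-periodic 2-triangulations on the
`4n`-gon is regular of degree `2(n−1)`: for every `n`-periodic
2-triangulation `T`, the number of `n`-periodic 2-triangulations `T' ≠ T`
such that `T ∖ T'` is the rotation orbit `ẽ` of a single 2-relevant edge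
`e ∈ T` (and `T' ⊇ T ∖ ẽ`) is exactly `2(n−1)`. -/
theorem flip_graph_regular (n : ℕ) (hn : 1 ≤ n)
    (T : Set (Sym2 (ZMod (4 * n)))) (hT : IsPeriodicPolyTriangulation n T) :
    {T' : Set (Sym2 (ZMod (4 * n))) | IsPeriodicPolyTriangulation n T' ∧
        T' ≠ T ∧ ∃ e, e ∈ T ∧ PolyRelevant n e ∧ T \ T' = tilde n e ∧
          T \ tilde n e ⊆ T'}.ncard = 2 * (n - 1) := by
  have hE := hT.isLiftedTriangulation_lift hn
  choose! flip hflip huniq using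
    fun x => hT.existsUnique_flip_of_mem_edgeReps hn (x := x)
  rw [← hT.card_edgeReps_lift hn, ← Set.ncard_coe_finset]
  refine (Set.ncard_congr (fun x _ => flip x) ?_ ?_ ?_).symm
  · intro x hx
    obtain ⟨-, -, -, hlt, hle⟩ := (mem_edgeReps hE).1 hx
    have hmem : polyEdge (4 * n) x.1 x.2 ∈ T \ flip x := (hflip x hx).2 ▸ self_mem_tilde _
    refine ⟨(hflip x hx).1, fun h => hmem.2 (h ▸ hmem.1), _, hmem.1,
      polyRelevant_polyEdge (by omega) (by omega), (hflip x hx).2, ?_⟩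
    rw [← (hflip x hx).2, Set.sdiff_sdiff_right_self]
    exact Set.inter_subset_right
  · intro x y hx hy hxy
    exact hT.injOn_tilde_edgeReps hn hx hy
      ((hflip x hx).2.symm.trans (hxy ▸ (hflip y hy).2))
  · rintro T' ⟨hT', -, e, he, hrel, hdiff, -⟩
    obtain ⟨x, hx, htilde⟩ := hT.exists_mem_edgeReps_tilde_eq he hrel
    exact ⟨x, hx, (huniq x hx T' ⟨hT', hdiff.trans htilde.symm⟩).symm⟩

end Multitriangulation
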